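/- For every M, A, n ∈ ℕ with M ≥ 1, there exist h, d, m ∈ ℕ with m ≥ 2 such that G_{h,d,m} is not (M,A)-quasi-isometric to any graph that has no K_n minor. -/

import Mathlib

open SimpleGraph

namespace CGT

/-- Distance between two vertex sets, as an extended natural number. -/
noncomputable def sDist {V : Type*} (G : SimpleGraph V) (U U' : Set V) : ℕ∞ :=
  ⨅ (u : U) (v : U'), G.edist u.1 v.1

/-- The ball of radius `r` around a vertex set `U`. -/
def gBall {V : Type*} (G : SimpleGraph V) (U : Set V) (r : ℕ) : Set V :=
  {v | ∃ u ∈ U, G.edist u v ≤ (r : ℕ∞)}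

/-- A set of vertices is connected if the induced subgraph is connected. -/
def SetConn {V : Type*} (G : SimpleGraph V) (U : Set V) : Prop :=
  (G.induce U).Connected

/-- The vertex set of a walk. -/
def walkSupp {V : Type*} {G : SimpleGraph V} {a b : V} (p : G.Walk a b) : Set V :=
  {v | v ∈ p.support}

/-- `X` separates `Y` and `Z` in `G`: every path with one end in `Y` and one in `Z`
contains a vertex of `X`. -/
def Separates {V : Type*} (G : SimpleGraph V) (X Y Z : Set V) : Prop :=
  ∀ ⦃y z : V⦄, y ∈ Y → z ∈ Z → ∀ p : G.Walk y z, p.IsPath → ∃ x ∈ X, x ∈ p.support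

/-- `f` is an `(M,A)`-quasi-isometry from `G` to `H`.  The two-sided distance bound
`M⁻¹ d_G(u,v) - A ≤ d_H(f u, f v) ≤ M d_G(u,v) + A` is stated multiplied out over `ℕ∞`. -/
structure IsQI {V V' : Type*} (M A : ℕ) (G : SimpleGraph V) (H : SimpleGraph V')
    (f : V → V') : Prop where
  upper : ∀ u v : V, H.edist (f u) (f v) ≤ (M : ℕ∞) * G.edist u v + (A : ℕ∞)
  lower : ∀ u v : V, G.edist u v ≤ (M : ℕ∞) * H.edist (f u) (f v) + (M : ℕ∞) * (A : ℕ∞)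
  dense : ∀ w : V', ∃ v : V, H.edist w (f v) ≤ (A : ℕ∞)

/-- `G` is `(M,A)`-quasi-isometric to `H`. -/
def QIsometric {V V' : Type*} (M A : ℕ) (G : SimpleGraph V) (H : SimpleGraph V') : Prop :=
  ∃ f : V → V', IsQI M A G H f

/-- `X` is a minor of `G`. -/
def HasMinor {V W : Type*} (G : SimpleGraph V) (X : SimpleGraph W) : Prop :=
  ∃ U : W → Set V,
    (∀ x, (U x).Nonempty) ∧ (∀ x, SetConn G (U x)) ∧
    (∀ ⦃x y⦄, x ≠ y → Disjoint (U x) (U y)) ∧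
    ∀ ⦃x y⦄, X.Adj x y → ∃ u ∈ U x, ∃ v ∈ U y, G.Adj u v

/-- The `(a × b)`-grid graph. -/
def gridGraph (a b : ℕ) : SimpleGraph (Fin a × Fin b) :=
  SimpleGraph.fromRel (fun u v =>
    (u.1 = v.1 ∧ u.2.1 + 1 = v.2.1) ∨ (u.2 = v.2 ∧ u.1.1 + 1 = v.1.1))

/-- A `K`-fat model of `X` in `G`: disjoint connected branch sets joined by internally
disjoint branch paths, all pairwise at distance at least `K` except for a branch path and
the branch sets of its endpoints. -/
structure FatModel {V W : Type*} (G : SimpleGraph V) (X : SimpleGraph W) (K : ℕ) where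
  branch : W → Set V
  branch_nonempty : ∀ x, (branch x).Nonempty
  branch_connected : ∀ x, SetConn G (branch x)
  branch_disjoint : ∀ ⦃x y⦄, x ≠ y → Disjoint (branch x) (branch y)
  pathEnd : ∀ ⦃x y⦄, X.Adj x y → V
  path : ∀ ⦃x y⦄ (e : X.Adj x y), G.Walk (pathEnd e) (pathEnd e.symm)
  path_isPath : ∀ ⦃x y⦄ (e : X.Adj x y), (path e).IsPath
  path_symm : ∀ ⦃x y⦄ (e : X.Adj x y), path e.symm = (path e).reverse
  pathEnd_mem : ∀ ⦃x y⦄ (e : X.Adj x y), pathEnd e ∈ branch x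
  path_meets : ∀ ⦃x y⦄ (e : X.Adj x y) (z : W) (v : V), v ∈ (path e).support → v ∈ branch z →
    (z = x ∧ v = pathEnd e) ∨ (z = y ∧ v = pathEnd e.symm)
  path_int_disjoint : ∀ ⦃x y x' y'⦄ (e : X.Adj x y) (e' : X.Adj x' y'), s(x, y) ≠ s(x', y') →
    ∀ v, v ∈ (path e).support → v ∈ (path e').support → v = pathEnd e' ∨ v = pathEnd e'.symm
  fat_branch : ∀ ⦃x y⦄, x ≠ y → (K : ℕ∞) ≤ sDist G (branch x) (branch y)
  fat_path_branch : ∀ ⦃x y⦄ (e : X.Adj x y) (z : W), z ≠ x → z ≠ y →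
    (K : ℕ∞) ≤ sDist G (walkSupp (path e)) (branch z)
  fat_paths : ∀ ⦃x y x' y'⦄ (e : X.Adj x y) (e' : X.Adj x' y'), s(x, y) ≠ s(x', y') →
    (K : ℕ∞) ≤ sDist G (walkSupp (path e)) (walkSupp (path e'))

/-- `X` is a `K`-fat minor of `G`. -/
def IsFatMinor {V W : Type*} (G : SimpleGraph V) (X : SimpleGraph W) (K : ℕ) : Prop :=
  Nonempty (FatModel G X K)

/-- `W` is a `K`-fat `n`-path-connected set in `G`. -/
def FatPathConn {V : Type*} (G : SimpleGraph V) (K n : ℕ) (W : Set V) : Prop :=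
  (∃ S : Finset V, ↑S ⊆ W ∧ 2 * n ≤ S.card) ∧
  (∀ ⦃u v : V⦄, u ∈ W → v ∈ W → u ≠ v → (K : ℕ∞) ≤ G.edist u v) ∧
  ∀ l : ℕ, l ≤ n → ∀ A B : Finset V, ↑A ⊆ W → ↑B ⊆ W → A.card = l → B.card = l →
    ∃ (a b : Fin l → V) (P : ∀ i : Fin l, G.Walk (a i) (b i)),
      (∀ i, (P i).IsPath) ∧ (∀ i, a i ∈ A ∧ b i ∈ B) ∧
      ∀ i j, i ≠ j → (K : ℕ∞) ≤ sDist G (walkSupp (P i)) (walkSupp (P j))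

end CGT

namespace Ghdm

/-- Raw vertex codes for the graphs `G_{h,d,m}`:
`path k` is the `k`-th vertex of the base path; `tree j i p` is the vertex at position `p`
of the `i`-th binary tree at level `j` (the root being position `[]`); and
`spine j i k t e s` is the `s`-th internal vertex of the spine from the `k`-th leaf of that
tree to the `e`-th element of the `t`-th local gluing set at level `j-1`. -/
inductive Raw : Type where
  | path (k : ℕ)
  | tree (j i : ℕ) (p : List Bool)
  | spine (j i k t e s : ℕ)
deriving DecidableEq

/-- `N = 2^{h+1} - 1`, the number of copies of `G_{h,d,m-1}` glued inside `G_{h,d,m}`. -/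
def NN (h : ℕ) : ℕ := 2 ^ (h + 1) - 1

/-- Canonical representative of a raw vertex code: all tree roots are identified with the
single root `tree m 1 []`, and the leftmost leaf of tree `i > 1` is identified with the
rightmost leaf of tree `i - 1` (consecutive copies are glued along these leaves). -/
def canon (h m : ℕ) : Raw → Raw
  | .tree j i p =>
    if p = [] then .tree m 1 []
    else if p = List.replicate h false ∧ 1 < i then .tree j (i - 1) (List.replicate h true)
    else .tree j i p
  | x => x

/-- The `q`-bit binary representation of `i` (most significant bit first);
`false` means "left". -/
def natToBits (q i : ℕ) : List Bool := (List.range q).map fun a => Nat.testBit i (q - 1 - a)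

/-- Position of the `k`-th leaf (1-based, from the left) in a binary tree of height `h`. -/
def leafPos (h k : ℕ) : List Bool := natToBits h (k - 1)

/-- The `e`-th element of the `g`-th gluing set `V^{jv}_g` (at level `jv`):
its element `e = 1` is an anchor of the base path, and its element `e ≥ 2` is a shared
extreme leaf of the trees at level `e`. -/
def VsetElem (h d jv g e : ℕ) : Raw :=
  if e = 1 then .path ((g - 1) * NN h ^ (jv - 1) * (d + 1))
  else if (g - 1) * NN h ^ (jv - e) = 0 then .tree e 1 (List.replicate h false)
  else .tree e ((g - 1) * NN h ^ (jv - e)) (List.replicate h true)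

/-- Valid (canonical) vertex codes of `G_{h,d,m}`. -/
def Valid (h d m : ℕ) : Raw → Prop
  | .path k => k ≤ (d + 1) * NN h ^ (m - 1)
  | .tree j i p => 2 ≤ j ∧ j ≤ m ∧ 1 ≤ i ∧ i ≤ NN h ^ (m - j) ∧ p.length ≤ h ∧
      (p = [] → j = m ∧ i = 1) ∧ (p = List.replicate h false → p ≠ [] → i = 1)
  | .spine j i k t e s => 2 ≤ j ∧ j ≤ m ∧ 1 ≤ i ∧ i ≤ NN h ^ (m - j) ∧
      1 ≤ k ∧ k ≤ 2 ^ h ∧ (t = 2 * k - 2 ∨ t = 2 * k + 1) ∧ 1 ≤ t ∧ t ≤ 2 ^ (h + 1) ∧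
      1 ≤ e ∧ e ≤ j - 1 ∧ 1 ≤ s ∧ s ≤ d

/-- Generating adjacencies between raw vertex codes: consecutive base path vertices,
parent/child in the binary trees, consecutive spine vertices, a spine and the leaf it
starts at, a spine and the gluing-set vertex it ends at (the latter collapsed to a single
edge when `d = 0`). -/
inductive rawAdj (h d : ℕ) : Raw → Raw → Prop
  | base (k : ℕ) : rawAdj h d (.path k) (.path (k + 1))
  | child (j i : ℕ) (p : List Bool) (b : Bool) : p.length < h →
      rawAdj h d (.tree j i p) (.tree j i (p ++ [b]))
  | step (j i k t e s : ℕ) : rawAdj h d (.spine j i k t e s) (.spine j i k t e (s + 1))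
  | toLeaf (j i k t e : ℕ) : rawAdj h d (.tree j i (leafPos h k)) (.spine j i k t e 1)
  | toV (j i k t e : ℕ) :
      rawAdj h d (.spine j i k t e d) (VsetElem h d (j - 1) ((i - 1) * NN h + t) e)
  | short (j i k t e : ℕ) : d = 0 → 1 ≤ k → k ≤ 2 ^ h → (t = 2 * k - 2 ∨ t = 2 * k + 1) →
      1 ≤ t → t ≤ 2 ^ (h + 1) → 1 ≤ e → e ≤ j - 1 →
      rawAdj h d (.tree j i (leafPos h k)) (VsetElem h d (j - 1) ((i - 1) * NN h + t) e)

/-- Adjacency of canonical representatives. -/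
def rel (h d m : ℕ) (x y : Raw) : Prop :=
  ∃ a b, rawAdj h d a b ∧ x = canon h m a ∧ y = canon h m b

/-- The vertex set of `G_{h,d,m}`. -/
def Verts (h d m : ℕ) : Set Raw := {x | Valid h d m x}

/-- The graph `G_{h,d,m}`. -/
def G (h d m : ℕ) : SimpleGraph (Verts h d m) :=
  (SimpleGraph.fromRel (rel h d m)).induce (Verts h d m)

/-- Lift a set of raw codes to a set of vertices of `G_{h,d,m}`. -/
def lift {h d m : ℕ} (S : Set Raw) : Set (Verts h d m) := Subtype.val ⁻¹' S

/-- The root `R(G_{h,d,m})`. -/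
def RootR (m : ℕ) : Raw := .tree m 1 []

/-- The gluing set `V^{jv}_g` of `G_{h,d,m}`, as a set of raw codes. -/
def VsetRaw (h d m jv g : ℕ) : Set Raw :=
  {x | ∃ e, 1 ≤ e ∧ e ≤ jv ∧ x = canon h m (VsetElem h d jv g e)}

/-- The set `S(G_{h,d,m})`. -/
def SsetR (h d m : ℕ) : Set Raw :=
  VsetRaw h d m (m - 1) 1 ∪ {canon h m (.tree m 1 (leafPos h 1))}

/-- The set `T(G_{h,d,m})`. -/
def TsetR (h d m : ℕ) : Set Raw :=
  VsetRaw h d m (m - 1) (2 ^ (h + 1)) ∪ {canon h m (.tree m 1 (leafPos h (2 ^ h)))}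

/-- For a vertex of the top binary tree at position `p`, the (1-based) index of the
leftmost leaf of the top tree below it. -/
def kOf (h : ℕ) (p : List Bool) : ℕ :=
  (p.foldl (fun a b => 2 * a + if b then 1 else 0) 0) * 2 ^ (h - p.length) + 1

/-- `S(Δ(x))` for the vertex `x` of the top binary tree `B(G_{h,d,m})` at position `p`. -/
def SDeltaR (h d m : ℕ) (p : List Bool) : Set Raw :=
  VsetRaw h d m (m - 1) (2 * kOf h p - 1) ∪ {canon h m (.tree m 1 (leafPos h (kOf h p)))}

/-- The leaf of `B(G_{h,d,m})` immediately to the left of the leftmost leaf below the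
top-tree vertex at position `p`; it is the unique leaf joined by spines to `S(Δ(x))`. -/
def leafLeftR (h m : ℕ) (p : List Bool) : Raw :=
  canon h m (.tree m 1 (leafPos h (kOf h p - 1)))

end Ghdm

/-!
Inside `G h d m`, call the gluing vertices hubs. A coarse embedding of the graph into `H` maps the
hubs far apart, and away from small balls around the hubs it maps the trees, rails and spines to
connected sets which stay pairwise disjoint. So a minor of `H` contains a *ladder*: the hubs as
single vertices, and for every tree and every rail one connected piece.

In a ladder, the `j + 1` hubs of each gluing set of level `j` are linked by `j + 1` disjoint
connected sets crossing all gluing sets of that level. This is proved by induction on `j` with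
Menger's theorem: consider a set of at most `j + 1` vertices in a block of level `j + 1`. If it
meets the tree piece of the block, it misses one of the `j + 1` crossing sets in each block of
level `j`. Otherwise at most one block of level `j` contains all of it, and the spines of the tree
piece bypass that block.

Finally, every other tree piece of the next level meets all the crossing sets through its spines,
which yields a large complete minor.
-/

namespace CGT

/-! ### Reachability inside a vertex set -/

section Reachability

variable {V : Type*} {G G' : SimpleGraph V} {U U' : Set V} {a b c : V}

/-- `b` can be reached from `a` along edges of `G` without leaving the vertex set `U`. -/
inductive ReachableIn (G : SimpleGraph V) (U : Set V) (a : V) : V → Prop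
  | refl : a ∈ U → ReachableIn G U a a
  | tail {b c : V} : ReachableIn G U a b → G.Adj b c → c ∈ U → ReachableIn G U a c

namespace ReachableIn

theorem mem_right (h : ReachableIn G U a b) : b ∈ U := by
  cases h <;> assumption

theorem mem_left (h : ReachableIn G U a b) : a ∈ U := by
  induction h <;> assumption

theorem mono (h : ReachableIn G U a b) (hG : G ≤ G') (hU : U ⊆ U') : ReachableIn G' U' a b := by
  induction h with
  | refl ha => exact .refl (hU ha)
  | tail _ hadj hc ih => exact .tail ih (hG hadj) (hU hc)

theorem mono_set (h : ReachableIn G U a b) (hU : U ⊆ U') : ReachableIn G U' a b :=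
  h.mono le_rfl hU

theorem trans (hab : ReachableIn G U a b) (hbc : ReachableIn G U b c) : ReachableIn G U a c := by
  induction hbc with
  | refl _ => exact hab
  | tail _ hadj hc ih => exact ih.tail hadj hc

theorem of_adj (h : G.Adj a b) (ha : a ∈ U) (hb : b ∈ U) : ReachableIn G U a b :=
  (refl ha).tail h hb

theorem symm (h : ReachableIn G U a b) : ReachableIn G U b a := by
  induction h with
  | refl ha => exact .refl ha
  | tail hab hadj hc ih => exact (of_adj hadj.symm hc hab.mem_right).trans ih

theorem exists_boundary_adj (h : ReachableIn G U a b) (D : Set V) (ha : a ∈ D) (hb : b ∉ D) :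
    ∃ x ∈ D ∩ U, ∃ y ∈ U \ D, G.Adj x y := by
  induction h with
  | refl _ => exact absurd ha hb
  | @tail b c hab hadj hc ih =>
    by_cases hbD : b ∈ D
    · exact ⟨b, ⟨hbD, hab.mem_right⟩, c, ⟨hc, hb⟩, hadj⟩
    · exact ih hbD

theorem of_walk (p : G.Walk a b) (hp : ∀ v ∈ p.support, v ∈ U) : ReachableIn G U a b := by
  induction p with
  | nil => exact .refl (hp _ (by simp))
  | cons hadj p ih =>
    exact (of_adj hadj (hp _ (by simp)) (hp _ (by simp))).trans
      (ih fun v hv => hp v (by simp [hv]))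

theorem component (h : ReachableIn G U a b) : ReachableIn G {c | ReachableIn G U a c} a b := by
  induction h with
  | refl ha => exact .refl (.refl ha)
  | tail hab hadj hc ih => exact ih.tail hadj (hab.tail hadj hc)

theorem of_chain {c : ℕ → V} {n : ℕ} (h : ∀ s < n, G.Adj (c s) (c (s + 1)))
    (hU : ∀ s ≤ n, c s ∈ U) : ReachableIn G U (c 0) (c n) := by
  induction n with
  | zero => exact .refl (hU 0 le_rfl)
  | succ n ih =>
    exact (ih (fun s hs => h s (by omega)) fun s hs => hU s (by omega)).tail
      (h n (by omega)) (hU _ le_rfl)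

end ReachableIn

theorem setConn_of_center (ha : a ∈ U) (h : ∀ b ∈ U, ReachableIn G U a b) : SetConn G U := by
  have reach : ∀ b, ReachableIn G U a b → ∀ hb : b ∈ U, (G.induce U).Reachable ⟨a, ha⟩ ⟨b, hb⟩ := by
    intro b hab
    induction hab with
    | refl _ => exact fun _ => .rfl
    | @tail b c hab hadj _ ih =>
      intro hc
      exact (ih hab.mem_right).trans
        (SimpleGraph.Adj.reachable (show (G.induce U).Adj ⟨b, hab.mem_right⟩ ⟨c, hc⟩ from hadj))
  exact SimpleGraph.connected_iff_exists_forall_reachable _ |>.2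
    ⟨⟨a, ha⟩, fun b => reach b (h b b.2) b.2⟩

theorem SetConn.reachableIn (hU : SetConn G U) (ha : a ∈ U) (hb : b ∈ U) :
    ReachableIn G U a b := by
  obtain ⟨p⟩ := hU.preconnected ⟨a, ha⟩ ⟨b, hb⟩
  refine .of_walk (p.map (SimpleGraph.Embedding.induce U).toHom) fun v hv => ?_
  obtain ⟨u, -, rfl⟩ := List.mem_map.1 (p.support_map _ ▸ hv)
  exact u.2

theorem setConn_component (ha : a ∈ U) : SetConn G {b | ReachableIn G U a b} :=
  setConn_of_center (.refl ha) fun _ => ReachableIn.component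

theorem setConn_singleton (a : V) : SetConn G {a} :=
  setConn_of_center rfl fun _ hb => hb ▸ .refl rfl

theorem SetConn.nonempty (hU : SetConn G U) : U.Nonempty :=
  Set.nonempty_coe_sort.1 (SimpleGraph.Connected.nonempty hU)

theorem SetConn.mono (hU : SetConn G U) (hG : G ≤ G') : SetConn G' U :=
  SimpleGraph.Connected.mono (SimpleGraph.comap_monotone _ hG) hU

theorem SetConn.union (hU : SetConn G U) (hU' : SetConn G U') (ha : a ∈ U) (hb : b ∈ U')
    (hab : a = b ∨ G.Adj a b) : SetConn G (U ∪ U') := by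
  rcases hab with rfl | hab
  · exact SimpleGraph.induce_union_connected hU.preconnected hU'.preconnected ⟨a, ha, hb⟩
  · exact SimpleGraph.connected_induce_union hU.preconnected hU'.preconnected ha hb hab

end Reachability

/-! ### Packings and Menger's theorem -/

section Packing

variable {V ι : Type*} {G G' : SimpleGraph V} {R R' : Set V} {P Q : ι → Set V}

/-- `P` is a family of pairwise disjoint connected vertex sets contained in `R`. -/
structure IsPacking (G : SimpleGraph V) (R : Set V) (P : ι → Set V) : Prop where
  conn : ∀ i, SetConn G (P i)
  subset : ∀ i, P i ⊆ R
  eq_of_mem : ∀ {i j v}, v ∈ P i → v ∈ P j → i = j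

namespace IsPacking

theorem mono (hP : IsPacking G R P) (hG : G ≤ G') (hR : R ⊆ R') : IsPacking G' R' P where
  conn i := (hP.conn i).mono hG
  subset i := (hP.subset i).trans hR
  eq_of_mem := hP.eq_of_mem

theorem reindex {κ : Type*} (hP : IsPacking G R P) (σ : κ ≃ ι) :
    IsPacking G R fun i => P (σ i) where
  conn i := hP.conn (σ i)
  subset i := hP.subset (σ i)
  eq_of_mem hi hj := σ.injective (hP.eq_of_mem hi hj)

theorem exists_perm_mem [Finite ι] (hP : IsPacking G R P) (g : ι → V)
    (hg : ∀ i, ∃ e, g e ∈ P i) : ∃ σ : Equiv.Perm ι, ∀ e, g e ∈ P (σ e) := by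
  choose φ hφ using hg
  have inj : Function.Injective φ := fun i j hij => hP.eq_of_mem (hφ i) (hij ▸ hφ j)
  refine ⟨(Equiv.ofBijective φ (Finite.injective_iff_bijective.1 inj)).symm, fun e => ?_⟩
  simpa [Equiv.ofBijective_apply_symm_apply] using
    hφ ((Equiv.ofBijective φ (Finite.injective_iff_bijective.1 inj)).symm e)

theorem exists_disjoint [Fintype ι] (hP : IsPacking G R P) (X : Finset V)
    (hX : (↑X ∩ R).ncard < Fintype.card ι) : ∃ i, Disjoint (P i) X := by
  by_contra! hmeet
  simp only [Set.not_disjoint_iff] at hmeet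
  choose x hxP hxX using hmeet
  have inj : Function.Injective x := fun i j hij => hP.eq_of_mem (hxP i) (hij ▸ hxP j)
  refine hX.not_ge ?_
  rw [← Nat.card_eq_fintype_card, ← Set.ncard_univ, ← Set.ncard_image_of_injective _ inj]
  refine Set.ncard_le_ncard ?_ (X.finite_toSet.inter_of_left R)
  rintro _ ⟨i, -, rfl⟩
  exact ⟨hxX i, hP.subset i (hxP i)⟩

theorem union (hP : IsPacking G R P) (hQ : IsPacking G R' Q)
    (hlink : ∀ i, ∃ v ∈ P i, ∃ w ∈ Q i, v = w ∨ G.Adj v w)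
    (hcross : ∀ {i j v}, v ∈ P i → v ∈ Q j → i = j) :
    IsPacking G (R ∪ R') fun i => P i ∪ Q i where
  conn i := by
    obtain ⟨v, hv, w, hw, hvw⟩ := hlink i
    exact (hP.conn i).union (hQ.conn i) hv hw hvw
  subset i := Set.union_subset_union (hP.subset i) (hQ.subset i)
  eq_of_mem := by
    rintro i j v (hi | hi) (hj | hj)
    · exact hP.eq_of_mem hi hj
    · exact hcross hi hj
    · exact (hcross hj hi).symm
    · exact hQ.eq_of_mem hi hj

end IsPacking

end Packing

section Menger

variable {V : Type*} {G G' : SimpleGraph V} {R S T X Y : Set V} {x y s t : V} {k : ℕ}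

/-- `G` contains `k` disjoint connected sets inside `R`, each meeting both `S` and `T`. -/
def Linked (G : SimpleGraph V) (R S T : Set V) (k : ℕ) : Prop :=
  ∃ P : Fin k → Set V, IsPacking G R P ∧ (∀ i, (P i ∩ S).Nonempty) ∧ ∀ i, (P i ∩ T).Nonempty

/-- No set of fewer than `k` vertices separates `S` from `T` inside `R`. -/
def Unseparated (G : SimpleGraph V) (R S T : Set V) (k : ℕ) : Prop :=
  ∀ X : Finset V, X.card < k → ∃ s ∈ S, ∃ t ∈ T, ReachableIn G (R \ X) s t

/-- The vertices that can be reached from `S` inside `U`. -/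
def reachFrom (G : SimpleGraph V) (U S : Set V) : Set V :=
  {v | ∃ s ∈ S, ReachableIn G U s v}

theorem Unseparated.symm (h : Unseparated G R S T k) : Unseparated G R T S k := fun X hX =>
  let ⟨s, hs, t, ht, hst⟩ := h X hX
  ⟨t, ht, s, hs, hst.symm⟩

theorem Linked.mono (h : Linked G R S T k) (hG : G ≤ G') : Linked G' R S T k :=
  let ⟨P, hP, hS, hT⟩ := h
  ⟨P, hP.mono hG subset_rfl, hS, hT⟩

theorem ReachableIn.eq_of_bot {U : Set V} (h : ReachableIn ⊥ U s t) : s = t := by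
  cases h with
  | refl => rfl
  | tail _ hadj => exact hadj.elim

theorem Unseparated.linked_bot (h : Unseparated (⊥ : SimpleGraph V) R S T k) :
    Linked ⊥ R S T k := by
  have large : (k : ℕ∞) ≤ (R ∩ (S ∩ T)).encard := by
    by_contra! hlt
    have hfin := Set.finite_of_encard_le_coe hlt.le
    obtain ⟨s, hs, t, ht, hst⟩ := h hfin.toFinset (by
      rwa [hfin.encard_eq_coe_toFinset_card, Nat.cast_lt] at hlt)
    obtain rfl := hst.eq_of_bot
    have := hst.mem_left
    simp_all
  obtain ⟨A, hA, hcard⟩ := Set.exists_subset_encard_eq large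
  have hfin := Set.finite_of_encard_le_coe hcard.le
  rw [hfin.encard_eq_coe_toFinset_card, Nat.cast_inj] at hcard
  let e := hfin.toFinset.equivFinOfCardEq hcard
  have he : ∀ i, (e.symm i : V) ∈ R ∩ (S ∩ T) := fun i =>
    hA (hfin.mem_toFinset.1 (e.symm i).2)
  refine ⟨fun i => {(e.symm i : V)}, ⟨fun i => setConn_singleton _, fun i => ?_, fun hi hj => ?_⟩,
    fun i => ⟨_, rfl, (he i).2.1⟩, fun i => ⟨_, rfl, (he i).2.2⟩⟩
  · exact Set.singleton_subset_iff.2 (he i).1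
  · exact e.symm.injective (Subtype.ext (hi.symm.trans hj))

theorem ReachableIn.exists_reachableIn_insert (h : ReachableIn G (R \ Y) s t) (hs : s ∈ S)
    (hG : ∀ {b c}, G.Adj b c → G'.Adj b c ∨ b = x ∨ b = y)
    (hy : y ∉ reachFrom G' (R \ X) S) (ht : t ∉ reachFrom G' (R \ X) S) :
    ∃ z ∈ insert x X, ReachableIn G' ((reachFrom G' (R \ X) S ∪ X ∩ R) \ Y) s z := by
  set D := reachFrom G' (R \ X) S
  suffices advance : (∃ z ∈ insert x X, ReachableIn G' ((D ∪ X ∩ R) \ Y) s z) ∨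
      t ∈ D ∧ ReachableIn G' ((D ∪ X ∩ R) \ Y) s t from advance.resolve_right fun h => ht h.1
  clear ht
  induction h with
  | refl hsR =>
    by_cases hsX : s ∈ X
    · exact .inl ⟨s, .inr hsX, .refl ⟨.inr ⟨hsX, hsR.1⟩, hsR.2⟩⟩
    · have hsD : s ∈ D := ⟨s, hs, .refl ⟨hsR.1, hsX⟩⟩
      exact .inr ⟨hsD, .refl ⟨.inl hsD, hsR.2⟩⟩
  | @tail b c _ hadj hc ih =>
    refine ih.elim .inl fun ⟨hbD, hsb⟩ => ?_
    rcases hG hadj with hadj | rfl | rfl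
    · by_cases hcX : c ∈ X
      · exact .inl ⟨c, .inr hcX, hsb.tail hadj ⟨.inr ⟨hcX, hc.1⟩, hc.2⟩⟩
      · obtain ⟨s', hs', hs'b⟩ := hbD
        have hcD : c ∈ D := ⟨s', hs', hs'b.tail hadj ⟨hc.1, hcX⟩⟩
        exact .inr ⟨hcD, hsb.tail hadj ⟨.inl hcD, hc.2⟩⟩
    · exact .inl ⟨b, .inl rfl, hsb⟩
    · exact absurd hbD hy

theorem Unseparated.insert_cut (h : Unseparated G R S T k)
    (hG : ∀ {b c}, G.Adj b c → G'.Adj b c ∨ b = x ∨ b = y)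
    (hy : y ∉ reachFrom G' (R \ X) S) (hT : Disjoint T (reachFrom G' (R \ X) S)) :
    Unseparated G' (reachFrom G' (R \ X) S ∪ X ∩ R) S (insert x X) k := fun Y hY =>
  let ⟨s, hs, _, ht, hst⟩ := h Y hY
  let ⟨z, hz, hsz⟩ := hst.exists_reachableIn_insert hs hG hy (Set.disjoint_left.1 hT ht)
  ⟨s, hs, z, hz, hsz⟩

theorem exists_adj_leaving_reachFrom (hs : s ∈ S) (h : ReachableIn G (R \ X) s t)
    (ht : t ∉ reachFrom G' (R \ X) S) :
    ∃ x ∈ reachFrom G' (R \ X) S, ∃ y ∉ reachFrom G' (R \ X) S, G.Adj x y ∧ ¬ G'.Adj x y := by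
  obtain ⟨x, ⟨⟨s', hs', hx⟩, -⟩, y, ⟨hyR, hy⟩, hxy⟩ :=
    h.exists_boundary_adj (reachFrom G' (R \ X) S) ⟨s, hs, .refl h.mem_left⟩ ht
  exact ⟨x, ⟨s', hs', hx⟩, y, hy, hxy, fun hxy' => hy ⟨s', hs', hx.tail hxy' hyR⟩⟩

theorem exists_forall_mem_eq_of_card_le {α : Type*} [Nonempty α] {s : Finset α}
    (h : s.card ≤ k) : ∃ c : Fin k → α, ∀ a ∈ s, ∃ i, c i = a := by
  obtain ⟨e⟩ : Nonempty (s ↪ Fin k) := Function.Embedding.nonempty_of_card_le (by simpa using h)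
  exact ⟨Function.extend e Subtype.val fun _ => Classical.arbitrary α,
    fun a ha => ⟨e ⟨a, ha⟩, e.injective.extend_apply _ _ _⟩⟩

theorem Linked.glue {D E : Set V} {X : Finset V} (hP : Linked G (D ∪ X ∩ R) S (insert x ↑X) k)
    (hQ : Linked G (E ∪ X ∩ R) T (insert y ↑X) k) (hX : X.card < k) (hxy : G.Adj x y)
    (hDR : D ⊆ R) (hER : E ⊆ R) (hDE : Disjoint D E) : Linked G R S T k := by
  classical
  obtain ⟨P, hP, hPS, hPX⟩ := hP
  obtain ⟨Q, hQ, hQT, hQX⟩ := hQ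
  -- `none` indexes the edge `xy`: its two ends are one point of the cut.
  obtain ⟨c, hc⟩ := exists_forall_mem_eq_of_card_le (s := Finset.insertNone X) (k := k)
    (by simpa using hX)
  have getD_mem : ∀ (z : V) {W : Set V}, (W ∩ insert z ↑X).Nonempty → ∃ i, (c i).getD z ∈ W := by
    rintro z W ⟨w, hw, rfl | hwX⟩
    · obtain ⟨i, hi⟩ := hc none (by simp)
      exact ⟨i, by simpa [hi]⟩
    · obtain ⟨i, hi⟩ := hc (some w) (by simpa using hwX)
      exact ⟨i, by simpa [hi]⟩
  obtain ⟨σ, hσ⟩ := hP.exists_perm_mem (fun i => (c i).getD x) fun i => getD_mem x (hPX i)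
  obtain ⟨τ, hτ⟩ := hQ.exists_perm_mem (fun i => (c i).getD y) fun i => getD_mem y (hQX i)
  have cross : ∀ {i j v}, v ∈ P (σ i) → v ∈ Q (τ j) → i = j := by
    intro i j v hi hj
    have hvX : v ∈ X := by
      rcases hP.subset _ hi with hvD | hvX
      · rcases hQ.subset _ hj with hvE | hvX
        · exact (Set.disjoint_left.1 hDE hvD hvE).elim
        · exact hvX.1
      · exact hvX.1
    obtain ⟨l, hl⟩ := hc (some v) (by simpa using hvX)
    have hPl := hσ l
    have hQl := hτ l
    simp only [hl, Option.getD_some] at hPl hQl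
    rw [σ.injective (hP.eq_of_mem hi hPl), τ.injective (hQ.eq_of_mem hj hQl)]
  have link : ∀ i, ∃ v ∈ P (σ i), ∃ w ∈ Q (τ i), v = w ∨ G.Adj v w := fun i =>
    ⟨_, hσ i, _, hτ i, by cases c i <;> simp [hxy]⟩
  have subset : D ∪ ↑X ∩ R ∪ (E ∪ ↑X ∩ R) ⊆ R := by
    rintro v ((hv | hv) | (hv | hv))
    exacts [hDR hv, hv.2, hER hv, hv.2]
  exact ⟨fun i => P (σ i) ∪ Q (τ i),
    ((hP.reindex σ).union (hQ.reindex τ) link cross).mono le_rfl subset,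
    fun i => (hPS (σ i)).mono (Set.inter_subset_inter_left _ Set.subset_union_left),
    fun i => (hQT (τ i)).mono (Set.inter_subset_inter_left _ Set.subset_union_right)⟩

theorem Linked.of_delete_edge {X : Finset V}
    (ih : ∀ {R S T : Set V}, Unseparated G' R S T k → Linked G' R S T k)
    (h : Unseparated G R S T k) (hle : G' ≤ G)
    (hedge : ∀ {a b c d}, G.Adj a b → ¬ G'.Adj a b → G.Adj c d → ¬ G'.Adj c d → s(a, b) = s(c, d))
    (hX : X.card < k) (hsep : ¬ ∃ s ∈ S, ∃ t ∈ T, ReachableIn G' (R \ X) s t) :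
    Linked G R S T k := by
  set D := reachFrom G' (R \ X) S
  set E := reachFrom G' (R \ X) T
  have hDE : Disjoint D E := Set.disjoint_left.2 fun v ⟨s, hs, hsv⟩ ⟨t, ht, htv⟩ =>
    hsep ⟨s, hs, t, ht, hsv.trans htv.symm⟩
  have hTD : Disjoint T D := Set.disjoint_left.2 fun t ht ⟨s, hs, hst⟩ => hsep ⟨s, hs, t, ht, hst⟩
  have hSE : Disjoint S E := Set.disjoint_left.2 fun s hs ⟨t, ht, hts⟩ =>
    hsep ⟨s, hs, t, ht, hts.symm⟩
  obtain ⟨s, hs, t, ht, hst⟩ := h X hX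
  obtain ⟨x, hxD, y, hyD, hxy, hxy'⟩ :=
    exists_adj_leaving_reachFrom hs hst (Set.disjoint_left.1 hTD ht)
  obtain ⟨y', hyE, x', hxE, hyx, hyx'⟩ :=
    exists_adj_leaving_reachFrom ht hst.symm (Set.disjoint_left.1 hSE hs)
  obtain ⟨rfl, rfl⟩ : x = x' ∧ y = y' := by
    rcases Sym2.eq_iff.1 (hedge hxy hxy' hyx hyx') with ⟨rfl, rfl⟩ | ⟨rfl, rfl⟩
    · exact (Set.disjoint_left.1 hDE hxD hyE).elim
    · exact ⟨rfl, rfl⟩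
  have hG : ∀ {b c}, G.Adj b c → G'.Adj b c ∨ b = x ∨ b = y := fun {b c} hbc =>
    or_iff_not_imp_left.2 fun hbc' =>
      (Sym2.eq_iff.1 (hedge hbc hbc' hxy hxy')).imp And.left And.left
  exact Linked.glue ((ih (h.insert_cut hG hyD hTD)).mono hle)
    ((ih (h.symm.insert_cut (fun hbc => (hG hbc).imp_right Or.symm) hxE hSE)).mono hle) hX hxy
    (fun v ⟨_, _, hv⟩ => hv.mem_right.1) (fun v ⟨_, _, hv⟩ => hv.mem_right.1) hDE

theorem Unseparated.linked (hfin : G.edgeSet.Finite) (h : Unseparated G R S T k) :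
    Linked G R S T k := by
  induction hn : G.edgeSet.ncard generalizing G R S T with
  | zero =>
    obtain rfl : G = ⊥ := SimpleGraph.edgeSet_eq_empty.1 ((Set.ncard_eq_zero hfin).1 hn)
    exact h.linked_bot
  | succ n ih =>
    obtain ⟨e, he⟩ := Set.nonempty_of_ncard_ne_zero (by rw [hn]; exact n.succ_ne_zero)
    have hle : G.deleteEdges {e} ≤ G := SimpleGraph.deleteEdges_le _
    have ih' : ∀ {R S T : Set V}, Unseparated (G.deleteEdges {e}) R S T k →
        Linked (G.deleteEdges {e}) R S T k := fun h' => by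
      refine ih (hfin.subset (SimpleGraph.edgeSet_mono hle)) h' ?_
      rw [SimpleGraph.edgeSet_deleteEdges, Set.ncard_sdiff_singleton_of_mem he, hn,
        Nat.add_sub_cancel]
    by_cases hdel : Unseparated (G.deleteEdges {e}) R S T k
    · exact (ih' hdel).mono hle
    · simp only [Unseparated, not_forall] at hdel
      obtain ⟨X, hX, hsep⟩ := hdel
      refine Linked.of_delete_edge ih' h hle (fun hab hab' hcd hcd' => ?_) hX hsep
      simp only [SimpleGraph.deleteEdges_adj, hab, hcd, true_and, not_not,
        Set.mem_singleton_iff] at hab' hcd'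
      rw [hab', hcd']

end Menger

/-! ### Ladders -/

/-- Whether leaf `κ` of a tree is joined by spines to the `τ`-th gluing set below that tree, both
counted from `0`. -/
def Attached (κ τ : ℕ) : Prop := τ + 1 = 2 * κ ∨ τ = 2 * κ + 2

/-- The two hubs at the ends of the piece `p`. -/
def ends (p : ℕ × ℕ) : Set (ℕ × ℕ) := {p, (p.1, p.2 + 1)}

/-- The piece `p` together with a set `T` of hubs. -/
def pieceWith {W : Type*} (piece : ℕ × ℕ → Set W) (p : ℕ × ℕ) (T : Set (ℕ × ℕ)) :
    Set (ℕ × ℕ ⊕ W) :=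
  Sum.inr '' piece p ∪ Sum.inl '' T

/-- The connectivity of `G_{h,d,L+1}` near its gluing sets that survives in a graph quasi-isometric
to it. The hub `Sum.inl (e, x)` is the vertex number `x`, from the left, in which consecutive trees
of level `e` (for `e = 0`: consecutive segments of the base path) are glued together, and
`piece (e, x)` is the part of the tree number `x` of level `e`, or of the segment, around its leaves
and spines. Levels are smaller by one than in the construction. -/
structure Ladder {W : Type*} (Γ : SimpleGraph (ℕ × ℕ ⊕ W)) (k N L : ℕ) where
  piece : ℕ × ℕ → Set W
  leaf : ℕ × ℕ → ℕ → ℕ × ℕ ⊕ W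
  N_add_one : N + 1 = 2 * k
  piece_unique : ∀ {w p q}, w ∈ piece p → w ∈ piece q → p = q
  rail : ∀ {i}, i < N ^ L → ReachableIn Γ (pieceWith piece (0, i) (ends (0, i)))
    (Sum.inl (0, i)) (Sum.inl (0, i + 1))
  leaf_zero : ∀ {j i}, j < L → i < N ^ (L - (j + 1)) → leaf (j + 1, i) 0 = Sum.inl (j + 1, i)
  leaf_last : ∀ {j i}, j < L → i < N ^ (L - (j + 1)) →
    leaf (j + 1, i) (k - 1) = Sum.inl (j + 1, i + 1)
  spine : ∀ {j i κ τ e}, j < L → i < N ^ (L - (j + 1)) → κ < k → Attached κ τ → τ ≤ N → e ≤ j →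
    ReachableIn Γ (pieceWith piece (j + 1, i)
        (insert (e, (i * N + τ) * N ^ (j - e)) (ends (j + 1, i))))
      (leaf (j + 1, i) κ) (Sum.inl (e, (i * N + τ) * N ^ (j - e)))

namespace Ladder

variable {W : Type*} {Γ : SimpleGraph (ℕ × ℕ ⊕ W)} {k N L : ℕ} (Λ : Ladder Γ k N L)
  {j i a b c : ℕ}

/-- The piece `p` with the hubs at its ends. -/
def cell (p : ℕ × ℕ) : Set (ℕ × ℕ ⊕ W) := pieceWith Λ.piece p (ends p)

include Λ in
theorem N_pos : 0 < N := by
  have := Λ.N_add_one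
  omega

/-- The part of the ladder of level at most `j` between the `a`-th and the `b`-th gluing set of
level `j`. -/
def region (j a b : ℕ) : Set (ℕ × ℕ ⊕ W) :=
  Sum.inl '' {p | p.1 ≤ j ∧ a * N ^ (j - p.1) ≤ p.2 ∧ p.2 ≤ b * N ^ (j - p.1)} ∪
    ⋃ p ∈ {p : ℕ × ℕ | p.1 ≤ j ∧ a * N ^ (j - p.1) ≤ p.2 ∧ p.2 < b * N ^ (j - p.1)},
      Sum.inr '' Λ.piece p

variable (W N) in
/-- The `e`-th element of the `c`-th gluing set of level `j`. -/
def gluing (j c : ℕ) (e : Fin (j + 1)) : ℕ × ℕ ⊕ W := Sum.inl (e, c * N ^ (j - e))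

variable {Λ}

@[simp]
theorem inl_mem_region {p : ℕ × ℕ} : Sum.inl p ∈ Λ.region j a b ↔
    p.1 ≤ j ∧ a * N ^ (j - p.1) ≤ p.2 ∧ p.2 ≤ b * N ^ (j - p.1) := by
  simp [region]

@[simp]
theorem inr_mem_region {w : W} : Sum.inr w ∈ Λ.region j a b ↔
    ∃ p, w ∈ Λ.piece p ∧ p.1 ≤ j ∧ a * N ^ (j - p.1) ≤ p.2 ∧ p.2 < b * N ^ (j - p.1) := by
  simp only [region, Set.mem_union, Set.mem_image, Set.mem_iUnion, Set.mem_ofPred_eq, reduceCtorEq,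
    and_false, exists_false, false_or, Sum.inr.injEq]
  grind

theorem region_mono {a' b' : ℕ} (ha : a' ≤ a) (hb : b ≤ b') :
    Λ.region j a b ⊆ Λ.region j a' b' := by
  have hN : ∀ e, a' * N ^ e ≤ a * N ^ e ∧ b * N ^ e ≤ b' * N ^ e := fun e => by
    constructor <;> gcongr
  rintro (p | w) hv
  · rw [inl_mem_region] at hv ⊢
    exact ⟨hv.1, (hN _).1.trans hv.2.1, hv.2.2.trans (hN _).2⟩
  · rw [inr_mem_region] at hv ⊢
    obtain ⟨p, hw, hp, hpa, hpb⟩ := hv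
    exact ⟨p, hw, hp, (hN _).1.trans hpa, hpb.trans_le (hN _).2⟩

theorem region_inter_subset :
    Λ.region j a b ∩ Λ.region j b c ⊆ Set.range (gluing W N j b) := by
  rintro (p | w) ⟨hab, hbc⟩
  · rw [inl_mem_region] at hab hbc
    exact ⟨⟨p.1, by omega⟩, by simp [gluing, Prod.ext_iff, le_antisymm hab.2.2 hbc.2.1]⟩
  · rw [inr_mem_region] at hab hbc
    obtain ⟨p, hwp, -, -, hpb⟩ := hab
    obtain ⟨q, hwq, -, hqb, -⟩ := hbc
    obtain rfl := Λ.piece_unique hwp hwq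
    exact absurd hqb hpb.not_ge

theorem disjoint_region {d : ℕ} (hbc : b < c) : Disjoint (Λ.region j a b) (Λ.region j c d) := by
  refine Set.disjoint_left.2 fun v hab hcd => ?_
  obtain ⟨e, rfl⟩ := region_inter_subset ⟨hab, region_mono hbc.le le_rfl hcd⟩
  rw [gluing, inl_mem_region] at hcd
  exact hbc.not_ge (Nat.le_of_mul_le_mul_right hcd.2.1 (Nat.pow_pos Λ.N_pos))

theorem gluing_mem_region (ha : a ≤ c) (hb : c ≤ b) (e : Fin (j + 1)) :
    gluing W N j c e ∈ Λ.region j a b := by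
  rw [gluing, inl_mem_region]
  exact ⟨Nat.lt_succ_iff.1 e.2, Nat.mul_le_mul_right _ ha, Nat.mul_le_mul_right _ hb⟩

theorem mul_mul_pow_sub {e : ℕ} (he : e ≤ j) (a : ℕ) :
    a * N * N ^ (j - e) = a * N ^ (j + 1 - e) := by
  rw [mul_assoc, ← pow_succ', Nat.sub_add_comm he]

theorem region_subset_succ : Λ.region j (a * N) (b * N) ⊆ Λ.region (j + 1) a b := by
  rintro (p | w) hv
  · obtain ⟨hp, hpa, hpb⟩ := inl_mem_region.1 hv
    rw [mul_mul_pow_sub hp] at hpa hpb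
    exact inl_mem_region.2 ⟨hp.trans j.le_succ, hpa, hpb⟩
  · obtain ⟨p, hw, hp, hpa, hpb⟩ := inr_mem_region.1 hv
    rw [mul_mul_pow_sub hp] at hpa hpb
    exact inr_mem_region.2 ⟨p, hw, hp.trans j.le_succ, hpa, hpb⟩

theorem range_gluing_subset_succ :
    Set.range (gluing W N j (c * N)) ⊆ Set.range (gluing W N (j + 1) c) := by
  rintro _ ⟨e, rfl⟩
  exact ⟨e.castSucc, by simp [gluing, mul_mul_pow_sub (Nat.lt_succ_iff.1 e.2)]⟩

theorem cell_subset_region : Λ.cell (j, i) ⊆ Λ.region j i (i + 1) := by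
  rintro v (⟨w, hw, rfl⟩ | ⟨p, rfl | rfl, rfl⟩)
  · exact inr_mem_region.2 ⟨_, hw, by simp⟩
  all_goals simp

theorem disjoint_cell_region : Disjoint (Λ.cell (j + 1, i)) (Λ.region j a b) := by
  rw [Set.disjoint_left]
  rintro v (⟨w, hw, rfl⟩ | ⟨p, hp, rfl⟩) hv
  · obtain ⟨q, hq, hqj, -⟩ := inr_mem_region.1 hv
    obtain rfl := Λ.piece_unique hw hq
    simp at hqj
  · have := (inl_mem_region.1 hv).1
    rcases hp with rfl | rfl <;> simp at this

theorem disjoint_cell {i' : ℕ} (hi : i + 1 < i') :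
    Disjoint (Λ.cell (j, i)) (Λ.cell (j, i')) :=
  (disjoint_region hi).mono cell_subset_region cell_subset_region

end Ladder

end CGT

namespace CGT.Ladder

/-! ### Disjoint sets crossing a ladder -/

variable {W : Type*} {Γ : SimpleGraph (ℕ × ℕ ⊕ W)} {k N L : ℕ} {Λ : Ladder Γ k N L}
  {j i a b c κ τ : ℕ} {X : Finset (ℕ × ℕ ⊕ W)} {v : ℕ × ℕ ⊕ W}

variable (Λ) in
/-- There are `j + 1` disjoint connected sets between the `a`-th and the `b`-th gluing set of level
`j`, each of which meets all the gluing sets of level `j` in between. -/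
def Crossed (j a b : ℕ) : Prop :=
  ∃ P : Fin (j + 1) → Set (ℕ × ℕ ⊕ W), IsPacking Γ (Λ.region j a b) P ∧
    ∀ c, a ≤ c → c ≤ b → ∀ l, ∃ e, gluing W N j c e ∈ P l

theorem Crossed.append (hab : Λ.Crossed j a b) (hbc : Λ.Crossed j b c) (hle : a ≤ b)
    (hle' : b ≤ c) : Λ.Crossed j a c := by
  obtain ⟨P, hP, hPg⟩ := hab
  obtain ⟨Q, hQ, hQg⟩ := hbc
  obtain ⟨σ, hσ⟩ := hP.exists_perm_mem _ (hPg b hle le_rfl)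
  obtain ⟨τ, hτ⟩ := hQ.exists_perm_mem _ (hQg b le_rfl hle')
  have cross : ∀ {l m v}, v ∈ P (σ l) → v ∈ Q (τ m) → l = m := by
    intro l m v hl hm
    obtain ⟨e, rfl⟩ := region_inter_subset ⟨hP.subset _ hl, hQ.subset _ hm⟩
    rw [σ.injective (hP.eq_of_mem hl (hσ e)), τ.injective (hQ.eq_of_mem hm (hτ e))]
  refine ⟨fun l => P (σ l) ∪ Q (τ l),
    ((hP.reindex σ).union (hQ.reindex τ) (fun l => ⟨_, hσ l, _, hτ l, .inl rfl⟩) cross).mono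
      le_rfl (Set.union_subset (region_mono le_rfl hle') (region_mono hle le_rfl)), ?_⟩
  intro c' hac' hc'c l
  rcases le_total c' b with hc'b | hbc'
  · exact (hPg c' hac' hc'b (σ l)).imp fun _ => .inl
  · exact (hQg c' hbc' hc'c (τ l)).imp fun _ => .inr

theorem crossed_of_forall_succ (h : ∀ c, a ≤ c → c < b → Λ.Crossed j c (c + 1)) (hab : a < b) :
    Λ.Crossed j a b := by
  induction b, hab using Nat.le_induction with
  | base => exact h a le_rfl (Nat.lt_succ_self a)
  | succ b hab ih =>
    exact (ih fun c hac hcb => h c hac (hcb.trans b.lt_succ_self)).append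
      (h b (Nat.le_of_lt hab) b.lt_succ_self) (Nat.le_of_lt hab) b.le_succ

theorem crossed_succ_of_linked (h : Linked Γ (Λ.region j i (i + 1)) (Set.range (gluing W N j i))
    (Set.range (gluing W N j (i + 1))) (j + 1)) : Λ.Crossed j i (i + 1) := by
  obtain ⟨P, hP, hleft, hright⟩ := h
  refine ⟨P, hP, fun c hic hci l => ?_⟩
  obtain rfl | rfl : c = i ∨ c = i + 1 := by omega
  · obtain ⟨_, hv, e, rfl⟩ := hleft l
    exact ⟨e, hv⟩
  · obtain ⟨_, hv, e, rfl⟩ := hright l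
    exact ⟨e, hv⟩

theorem crossed_zero (hi : i < N ^ L) : Λ.Crossed 0 i (i + 1) := by
  have hrail : ReachableIn Γ (Λ.cell (0, i)) (Sum.inl (0, i)) (Sum.inl (0, i + 1)) := Λ.rail hi
  refine ⟨fun _ => {v | ReachableIn Γ (Λ.cell (0, i)) (Sum.inl (0, i)) v},
    ⟨fun _ => setConn_component hrail.mem_left,
      fun _ v hv => cell_subset_region hv.mem_right, fun _ _ => Fin.ext (by omega)⟩, ?_⟩
  intro c hic hci _
  obtain rfl | rfl : c = i ∨ c = i + 1 := by omega
  · exact ⟨0, by simpa [gluing] using ReachableIn.refl hrail.mem_left⟩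
  · exact ⟨0, by simpa [gluing] using hrail⟩

variable (Λ) in
/-- The vertices that can be reached from the left end of the `i`-th block of level `j + 1` inside
that block minus the cut `X`. -/
def reached (X : Finset (ℕ × ℕ ⊕ W)) (j i : ℕ) : Set (ℕ × ℕ ⊕ W) :=
  reachFrom Γ (Λ.region (j + 1) i (i + 1) \ X) (Set.range (gluing W N (j + 1) i))

theorem mem_reached_of_reachableIn {u : ℕ × ℕ ⊕ W} (hu : u ∈ Λ.reached X j i)
    (h : ReachableIn Γ (Λ.region (j + 1) i (i + 1) \ X) u v) : v ∈ Λ.reached X j i :=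
  let ⟨s, hs, hsu⟩ := hu
  ⟨s, hs, hsu.trans h⟩

theorem mem_reached_of_mem_gluing (hv : v ∈ Set.range (gluing W N (j + 1) i)) (hX : v ∉ X) :
    v ∈ Λ.reached X j i := by
  obtain ⟨e, rfl⟩ := hv
  exact ⟨_, ⟨e, rfl⟩, .refl ⟨gluing_mem_region le_rfl i.le_succ e, hX⟩⟩

theorem exists_reached_of_crossed (h : Λ.Crossed j a b) (hab : a ≤ b) (ha : i * N ≤ a)
    (hb : b ≤ (i + 1) * N) (hX : (↑X ∩ Λ.region j a b).ncard ≤ j)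
    (hleft : ∀ e, gluing W N j a e ∉ X → gluing W N j a e ∈ Λ.reached X j i) :
    ∃ e, gluing W N j b e ∈ Λ.reached X j i := by
  obtain ⟨P, hP, hPg⟩ := h
  obtain ⟨l, hl⟩ := hP.exists_disjoint X (by simpa using Nat.lt_succ_of_le hX)
  obtain ⟨e, he⟩ := hPg a le_rfl hab l
  obtain ⟨e', he'⟩ := hPg b hab le_rfl l
  have hsub : P l ⊆ Λ.region (j + 1) i (i + 1) \ X := fun v hv =>
    ⟨region_subset_succ (region_mono ha hb (hP.subset l hv)), Set.disjoint_left.1 hl hv⟩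
  exact ⟨e', mem_reached_of_reachableIn (hleft e (hsub he).2)
    (((hP.conn l).reachableIn he he').mono_set hsub)⟩

theorem reachableIn_leaf_gluing (hj : j < L) (hi : i < N ^ (L - (j + 1))) (hκ : κ < k)
    (hκτ : Attached κ τ) (hτ : τ ≤ N) (hX : Disjoint (Λ.cell (j + 1, i)) X) (e : Fin (j + 1))
    (he : gluing W N j (i * N + τ) e ∉ X) :
    ReachableIn Γ (Λ.region (j + 1) i (i + 1) \ X) (Λ.leaf (j + 1, i) κ)
      (gluing W N j (i * N + τ) e) := by
  refine (Λ.spine hj hi hκ hκτ hτ (Nat.lt_succ_iff.1 e.2)).mono_set ?_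
  have hcell : Λ.cell (j + 1, i) ⊆ Λ.region (j + 1) i (i + 1) \ X := fun v hv =>
    ⟨cell_subset_region hv, Set.disjoint_left.1 hX hv⟩
  rintro v (hv | ⟨p, rfl | hp, rfl⟩)
  · exact hcell (.inl hv)
  · refine ⟨region_subset_succ (gluing_mem_region ?_ ?_ e), he⟩
    · omega
    · rw [Nat.succ_mul i]
      omega
  · exact hcell (.inr ⟨p, hp, rfl⟩)

theorem exists_attached (hτ : 1 ≤ τ) (hτN : τ + 1 < 2 * k) : ∃ κ < k, Attached κ τ := by
  rcases Nat.even_or_odd' τ with ⟨c, rfl | rfl⟩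
  · exact ⟨c - 1, by omega, .inr (by omega)⟩
  · exact ⟨c + 1, by omega, .inl (by omega)⟩

section Block

variable (hj : j < L) (hi : i < N ^ (L - (j + 1)))
  (hcross : ∀ c < N ^ (L - j), Λ.Crossed j c (c + 1))

include hj in
theorem pow_sub_eq : N ^ (L - j) = N ^ (L - (j + 1)) * N := by
  rw [← pow_succ]
  congr 1
  omega

include hj hi hcross in
theorem crossed_block (hab : a < b) (hb : b ≤ (i + 1) * N) : Λ.Crossed j a b := by
  refine crossed_of_forall_succ (fun c _ hcb => hcross c ?_) hab
  rw [pow_sub_eq hj]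
  exact (hcb.trans_le hb).trans_le (Nat.mul_le_mul_right N hi)

include hj hi in
theorem leaf_mem_reached (hdisj : Disjoint (Λ.cell (j + 1, i)) X) (hκ : κ < k)
    (hκτ : Attached κ τ) (hτ : τ ≤ N)
    (h : ∃ e, gluing W N j (i * N + τ) e ∈ Λ.reached X j i) :
    Λ.leaf (j + 1, i) κ ∈ Λ.reached X j i := by
  obtain ⟨e, he⟩ := h
  have heX : gluing W N j (i * N + τ) e ∉ X := fun heX => by
    obtain ⟨s, -, hs⟩ := he
    exact hs.mem_right.2 heX
  exact mem_reached_of_reachableIn he (reachableIn_leaf_gluing hj hi hκ hκτ hτ hdisj e heX).symm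

include hj hi in
theorem forall_reached_of_exists (hdisj : Disjoint (Λ.cell (j + 1, i)) X) (hτ : 1 ≤ τ)
    (hτN : τ < N) (h : ∃ e, gluing W N j (i * N + τ) e ∈ Λ.reached X j i) (e : Fin (j + 1))
    (he : gluing W N j (i * N + τ) e ∉ X) : gluing W N j (i * N + τ) e ∈ Λ.reached X j i := by
  have hN := Λ.N_add_one
  obtain ⟨κ, hκ, hκτ⟩ := exists_attached hτ (show τ + 1 < 2 * k by omega)
  exact mem_reached_of_reachableIn (leaf_mem_reached hj hi hdisj hκ hκτ hτN.le h)
    (reachableIn_leaf_gluing hj hi hκ hκτ hτN.le hdisj e he)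

include hj hi hcross in
theorem exists_reached_of_step (hτN : τ < N)
    (hX : (↑X ∩ Λ.region j (i * N + τ) (i * N + τ + 1)).ncard ≤ j)
    (hleft : ∀ e, gluing W N j (i * N + τ) e ∉ X → gluing W N j (i * N + τ) e ∈ Λ.reached X j i) :
    ∃ e, gluing W N j (i * N + (τ + 1)) e ∈ Λ.reached X j i := by
  have hb : i * N + τ + 1 ≤ (i + 1) * N := by
    rw [Nat.succ_mul i]
    omega
  exact exists_reached_of_crossed (crossed_block hj hi hcross (Nat.lt_succ_self _) hb)
    (Nat.le_succ _) (Nat.le_add_right _ _) hb hX hleft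

include hj hi hcross in
theorem exists_reached_of_forall_lt (hdisj : Disjoint (Λ.cell (j + 1, i)) X)
    (hτ : 1 ≤ τ) (hτN : τ ≤ N)
    (h : ∀ σ < τ, (↑X ∩ Λ.region j (i * N + σ) (i * N + σ + 1)).ncard ≤ j) :
    ∃ e, gluing W N j (i * N + τ) e ∈ Λ.reached X j i := by
  induction τ, hτ using Nat.le_induction with
  | base =>
    exact exists_reached_of_step hj hi hcross hτN (h 0 one_pos) fun e he =>
      mem_reached_of_mem_gluing (range_gluing_subset_succ ⟨e, by simp⟩) he
  | succ τ hτ ih =>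
    exact exists_reached_of_step hj hi hcross hτN (h τ τ.lt_succ_self)
      (forall_reached_of_exists hj hi hdisj hτ hτN
        (ih (Nat.le_of_lt hτN) fun σ hσ => h σ (hσ.trans τ.lt_succ_self)))

include hj hi hcross in
theorem exists_reached_right_of_not_disjoint (hX : X.card ≤ j + 1)
    (hmeet : ¬ Disjoint (Λ.cell (j + 1, i)) X) :
    ∃ e, gluing W N j ((i + 1) * N) e ∈ Λ.reached X j i := by
  have hlt : i * N < (i + 1) * N := Nat.mul_lt_mul_of_pos_right i.lt_succ_self Λ.N_pos
  refine exists_reached_of_crossed (crossed_block hj hi hcross hlt le_rfl) hlt.le le_rfl le_rfl ?_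
    fun e he => mem_reached_of_mem_gluing (range_gluing_subset_succ ⟨e, rfl⟩) he
  obtain ⟨x, hxcell, hxX⟩ := Set.not_disjoint_iff.1 hmeet
  have hss : ↑X ∩ Λ.region j (i * N) ((i + 1) * N) ⊂ (X : Set (ℕ × ℕ ⊕ W)) :=
    ⟨Set.inter_subset_left, fun hsub =>
      Set.disjoint_left.1 disjoint_cell_region hxcell (hsub hxX).2⟩
  have := Set.ncard_lt_ncard hss X.finite_toSet
  rw [Set.ncard_coe_finset] at this
  omega

include hj hi hcross in
theorem leaf_mem_reached_of_forall_lt (hdisj : Disjoint (Λ.cell (j + 1, i)) X) (hτN : τ < N)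
    (h : ∀ σ < τ, (↑X ∩ Λ.region j (i * N + σ) (i * N + σ + 1)).ncard ≤ j) :
    Λ.leaf (j + 1, i) ((τ + 1) / 2) ∈ Λ.reached X j i := by
  have hN := Λ.N_add_one
  rcases Nat.eq_zero_or_pos ((τ + 1) / 2) with hκ | hκ
  · rw [hκ, Λ.leaf_zero hj hi]
    refine mem_reached_of_mem_gluing ⟨Fin.last _, by simp [gluing]⟩
      (Set.disjoint_left.1 hdisj (.inr ⟨_, .inl rfl, rfl⟩))
  · refine leaf_mem_reached hj hi hdisj (by omega)
      (.inl (by omega) : Attached _ (2 * ((τ + 1) / 2) - 1)) (by omega) ?_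
    exact exists_reached_of_forall_lt hj hi hcross hdisj (by omega) (by omega)
      fun σ hσ => h σ (by omega)

include hj hi hcross in
theorem exists_reached_right_of_subset (hdisj : Disjoint (Λ.cell (j + 1, i)) X) (hτN : τ < N)
    (hsub : ↑X ⊆ Λ.region j (i * N + τ) (i * N + τ + 1))
    (h : ∀ σ < τ, (↑X ∩ Λ.region j (i * N + σ) (i * N + σ + 1)).ncard ≤ j) :
    ∃ v ∈ Set.range (gluing W N (j + 1) (i + 1)), v ∈ Λ.reached X j i := by
  have hN := Λ.N_add_one
  have hleaf := leaf_mem_reached_of_forall_lt hj hi hcross hdisj hτN h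
  set κ := (τ + 1) / 2
  rcases lt_or_ge (2 * κ + 2) N with hκ | hκ
  · have hlt : i * N + (2 * κ + 2) < (i + 1) * N := by
      rw [Nat.succ_mul i]
      omega
    have hempty : ↑X ∩ Λ.region j (i * N + (2 * κ + 2)) ((i + 1) * N) = ∅ :=
      Set.disjoint_iff_inter_eq_empty.1 ((disjoint_region (by omega)).mono_left hsub)
    obtain ⟨e, he⟩ := exists_reached_of_crossed (crossed_block hj hi hcross hlt le_rfl) hlt.le
      (Nat.le_add_right _ _) le_rfl (by simp [hempty]) fun e he =>
        mem_reached_of_reachableIn hleaf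
          (reachableIn_leaf_gluing hj hi (by omega) (.inr rfl) hκ.le hdisj e he)
    exact ⟨_, range_gluing_subset_succ ⟨e, rfl⟩, he⟩
  · rw [show κ = k - 1 by omega, Λ.leaf_last hj hi] at hleaf
    exact ⟨_, ⟨Fin.last _, by simp [gluing]⟩, hleaf⟩

include hj hi hcross in
theorem unseparated_succ : Unseparated Γ (Λ.region (j + 1) i (i + 1))
    (Set.range (gluing W N (j + 1) i)) (Set.range (gluing W N (j + 1) (i + 1))) (j + 2) := by
  intro X hX
  suffices ∃ v ∈ Set.range (gluing W N (j + 1) (i + 1)), v ∈ Λ.reached X j i by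
    obtain ⟨t, ht, s, hs, hst⟩ := this
    exact ⟨s, hs, t, ht, hst⟩
  have of_gluing : (∃ e, gluing W N j ((i + 1) * N) e ∈ Λ.reached X j i) →
      ∃ v ∈ Set.range (gluing W N (j + 1) (i + 1)), v ∈ Λ.reached X j i := fun ⟨e, he⟩ =>
    ⟨_, range_gluing_subset_succ ⟨e, rfl⟩, he⟩
  by_cases hdisj : Disjoint (Λ.cell (j + 1, i)) X
  swap
  · exact of_gluing (exists_reached_right_of_not_disjoint hj hi hcross (by omega) hdisj)
  by_cases hfull : ∃ τ, τ < N ∧ j < (↑X ∩ Λ.region j (i * N + τ) (i * N + τ + 1)).ncard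
  · classical
    obtain ⟨hτN, hτ⟩ := Nat.find_spec hfull
    refine exists_reached_right_of_subset hj hi hcross hdisj hτN ?_ fun σ hσ =>
      not_lt.1 fun hlt => Nat.find_min hfull hσ ⟨hσ.trans hτN, hlt⟩
    have hcard : (X : Set (ℕ × ℕ ⊕ W)).ncard ≤ j + 1 := by
      rw [Set.ncard_coe_finset]
      omega
    exact Set.inter_eq_left.1 (Set.eq_of_subset_of_ncard_le Set.inter_subset_left
      (hcard.trans hτ) X.finite_toSet)
  · push Not at hfull
    refine of_gluing ?_
    rw [Nat.succ_mul i]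
    exact exists_reached_of_forall_lt hj hi hcross hdisj Λ.N_pos le_rfl hfull

end Block

theorem crossed_succ (hfin : Γ.edgeSet.Finite) (hj : j ≤ L) :
    ∀ i < N ^ (L - j), Λ.Crossed j i (i + 1) := by
  induction j with
  | zero => exact fun i hi => crossed_zero hi
  | succ j ih =>
    exact fun i hi => crossed_succ_of_linked
      ((unseparated_succ hj hi (ih (Nat.le_of_lt hj))).linked hfin)

/-! ### Complete minors of ladders -/

theorem exists_adj_gluing (hj : j < L) (hi : i < N ^ (L - (j + 1))) (hN : 2 ≤ N)
    (e : Fin (j + 1)) : ∃ v, ReachableIn Γ (Λ.cell (j + 1, i)) (Sum.inl (j + 1, i)) v ∧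
      Γ.Adj v (gluing W N j (i * N + 2) e) := by
  have hk := Λ.N_add_one
  have hspine := Λ.spine hj hi (show 0 < k by omega) (.inr rfl) hN (Nat.lt_succ_iff.1 e.2)
  rw [Λ.leaf_zero hj hi] at hspine
  have hcenter : Sum.inl (j + 1, i) ∈ Λ.cell (j + 1, i) := .inr ⟨_, .inl rfl, rfl⟩
  obtain ⟨v, ⟨hv, -⟩, w, ⟨hw, hwD⟩, hvw⟩ := hspine.exists_boundary_adj
    {v | ReachableIn Γ (Λ.cell (j + 1, i)) (Sum.inl (j + 1, i)) v} (.refl hcenter) fun h =>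
      Set.disjoint_left.1 disjoint_cell_region h.mem_right
        (gluing_mem_region (Λ := Λ) (Nat.zero_le _) le_rfl e)
  obtain rfl : w = gluing W N j (i * N + 2) e := by
    have hw' : w ∉ Λ.cell (j + 1, i) := fun hmem => hwD (hv.tail hvw hmem)
    rcases hw with hw | ⟨p, rfl | hp, rfl⟩
    · exact absurd (.inl hw) hw'
    · rfl
    · exact absurd (.inr ⟨p, hp, rfl⟩) hw'
  exact ⟨v, hv, hvw⟩

theorem hasMinor_top (Λ : Ladder Γ k N (j + 2)) (hfin : Γ.edgeSet.Finite)
    (hN : 2 * (j + 1) ≤ N) : HasMinor Γ (⊤ : SimpleGraph (Fin (j + 1))) := by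
  let tree (a : Fin (j + 1)) : Set (ℕ × ℕ ⊕ W) :=
    {v | ReachableIn Γ (Λ.cell (j + 1, 2 * a)) (Sum.inl (j + 1, 2 * a)) v}
  have htree : IsPacking Γ Set.univ tree :=
    { conn := fun a => setConn_component (.inr ⟨_, .inl rfl, rfl⟩)
      subset := fun _ => Set.subset_univ _
      eq_of_mem := by
        intro a b v ha hb
        have hdisj : ∀ {a b : Fin (j + 1)}, v ∈ tree a → v ∈ tree b → ¬ a < b :=
          fun {a b} ha hb hab => Set.disjoint_left.1
            (disjoint_cell (show 2 * (a : ℕ) + 1 < 2 * b by omega)) ha.mem_right hb.mem_right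
        exact le_antisymm (not_lt.1 (hdisj hb ha)) (not_lt.1 (hdisj ha hb)) }
  obtain ⟨P, hP, hPg⟩ : Λ.Crossed j 0 (N * N) :=
    crossed_of_forall_succ (fun c _ hc => crossed_succ hfin (by omega) c (by
      simpa [pow_two] using hc)) (Nat.mul_pos Λ.N_pos Λ.N_pos)
  have link : ∀ a b, ∃ v ∈ P b, ∃ w ∈ tree a, Γ.Adj w v := by
    intro a b
    have hc : 2 * (a : ℕ) * N + 2 ≤ N * N := by nlinarith [a.2]
    obtain ⟨e, he⟩ := hPg (2 * a * N + 2) (Nat.zero_le _) hc b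
    obtain ⟨v, hv, hadj⟩ := exists_adj_gluing (Λ := Λ) (j := j) (i := 2 * a) (by omega)
      (by simp; omega) (by omega) e
    exact ⟨_, he, v, hv, hadj⟩
  have hbranch := hP.union htree
    (fun a => let ⟨v, hv, w, hw, hadj⟩ := link a a; ⟨v, hv, w, hw, .inr hadj.symm⟩)
    fun hv hw => (Set.disjoint_left.1 disjoint_cell_region hw.mem_right (hP.subset _ hv)).elim
  refine ⟨_, fun a => (hbranch.conn a).nonempty, hbranch.conn, fun a b hab =>
    Set.disjoint_left.2 fun v ha hb => hab (hbranch.eq_of_mem ha hb), fun a b _ => ?_⟩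
  obtain ⟨v, hv, w, hw, hadj⟩ := link a b
  exact ⟨w, .inr hw, v, .inl hv, hadj⟩

end CGT.Ladder

namespace CGT

/-! ### Balls and minors under maps -/

section Maps

variable {V V' ι κ : Type*} {G G' : SimpleGraph V} {H : SimpleGraph V'} {U U' : Set V} {a b : V}
  {r : ℕ} {f : V → V'}

theorem gBall_mono (hU : U ⊆ U') : gBall G U r ⊆ gBall G U' r :=
  fun _ ⟨u, hu, huv⟩ => ⟨u, hU hu, huv⟩

theorem subset_gBall : U ⊆ gBall G U r := fun u hu => ⟨u, hu, by simp⟩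

theorem reachableIn_gBall (h : G.edist a b ≤ r) : ReachableIn G (gBall G {a} r) a b := by
  classical
  obtain ⟨p, hp⟩ := SimpleGraph.exists_walk_of_edist_ne_top
    (ne_top_of_le_ne_top (ENat.natCast_ne_top r) h)
  refine .of_walk p fun v hv => ⟨a, rfl, ?_⟩
  calc G.edist a v ≤ (p.takeUntil v hv).length := SimpleGraph.edist_le _
    _ ≤ p.length := by exact_mod_cast p.length_takeUntil_le_length hv
    _ ≤ r := hp ▸ h

theorem setConn_gBall_singleton (a : V) (r : ℕ) : SetConn G (gBall G {a} r) :=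
  setConn_of_center (subset_gBall rfl) fun _ ⟨_, ha, hb⟩ => reachableIn_gBall (ha ▸ hb)

theorem ReachableIn.image (h : ReachableIn G U a b)
    (hf : ∀ u v, G.Adj u v → H.edist (f u) (f v) ≤ r) :
    ReachableIn H (gBall H (f '' U) r) (f a) (f b) := by
  induction h with
  | refl ha => exact .refl (subset_gBall ⟨_, ha, rfl⟩)
  | tail hab hadj _ ih =>
    exact ih.trans ((reachableIn_gBall (hf _ _ hadj)).mono_set
      (gBall_mono (Set.singleton_subset_iff.2 ⟨_, hab.mem_right, rfl⟩)))

theorem SetConn.image (hU : SetConn G U) (hf : ∀ u v, G.Adj u v → H.edist (f u) (f v) ≤ r) :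
    SetConn H (gBall H (f '' U) r) := by
  obtain ⟨a, ha⟩ := hU.nonempty
  refine setConn_of_center (subset_gBall ⟨a, ha, rfl⟩) ?_
  rintro y ⟨_, ⟨b, hb, rfl⟩, hy⟩
  exact ((hU.reachableIn ha hb).image hf).trans ((reachableIn_gBall hy).mono_set
    (gBall_mono (Set.singleton_subset_iff.2 ⟨b, hb, rfl⟩)))

theorem ReachableIn.map (h : ReachableIn G U a b) (q : V → V') :
    ReachableIn (G.map q) (q '' U) (q a) (q b) := by
  induction h with
  | refl ha => exact .refl ⟨_, ha, rfl⟩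
  | @tail b c _ hadj hc ih =>
    by_cases hbc : q b = q c
    · exact hbc ▸ ih
    · exact ih.tail ((SimpleGraph.map_adj' ..).2 ⟨hbc, b, c, hadj, rfl, rfl⟩) ⟨c, hc, rfl⟩

theorem ReachableIn.preimage {q : V → V'} {U : Set V'} {x y : V'}
    (hq : ∀ y ∈ Set.range q, SetConn G (q ⁻¹' {y})) (h : ReachableIn (G.map q) U x y)
    (ha : q a = x) (hb : q b = y) : ReachableIn G (q ⁻¹' U) a b := by
  induction h generalizing b with
  | refl hx =>
    refine ((hq x ⟨a, ha⟩).reachableIn ha hb).mono_set fun v hv => ?_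
    rwa [Set.mem_preimage, show q v = x from hv]
  | tail hxy hadj hz ih =>
    obtain ⟨-, u, v, huv, rfl, rfl⟩ := (SimpleGraph.map_adj' ..).1 hadj
    refine ((ih rfl).tail huv hz).trans ?_
    refine ((hq _ ⟨v, rfl⟩).reachableIn rfl hb).mono_set fun w hw => ?_
    rwa [Set.mem_preimage, show q w = q v from hw]

theorem HasMinor.of_map {X : SimpleGraph ι} {q : V → V'} (h : HasMinor (G.map q) X)
    (hq : ∀ y ∈ Set.range q, SetConn G (q ⁻¹' {y})) (hX : ∀ x, ∃ y, X.Adj x y) :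
    HasMinor G X := by
  obtain ⟨U, -, hconn, hdisj, hadj⟩ := h
  have hconn' : ∀ x, SetConn G (q ⁻¹' U x) := by
    intro x
    obtain ⟨y, hxy⟩ := hX x
    obtain ⟨_, hu, _, -, huv⟩ := hadj hxy
    obtain ⟨-, a, -, -, rfl, -⟩ := (SimpleGraph.map_adj' ..).1 huv
    exact setConn_of_center hu fun b hb => ((hconn x).reachableIn hu hb).preimage hq rfl rfl
  refine ⟨fun x => q ⁻¹' U x, fun x => (hconn' x).nonempty, hconn',
    fun x y hxy => (hdisj hxy).preimage q, fun x y hxy => ?_⟩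
  obtain ⟨_, hu, _, hv, huv⟩ := hadj hxy
  obtain ⟨-, a, b, hab, rfl, rfl⟩ := (SimpleGraph.map_adj' ..).1 huv
  exact ⟨a, hu, b, hv, hab⟩

theorem HasMinor.mono {X : SimpleGraph ι} (h : HasMinor G X) (hG : G ≤ G') : HasMinor G' X :=
  let ⟨U, hne, hconn, hdisj, hadj⟩ := h
  ⟨U, hne, fun x => (hconn x).mono hG, hdisj, fun _ _ hxy =>
    let ⟨u, hu, v, hv, huv⟩ := hadj hxy
    ⟨u, hu, v, hv, hG huv⟩⟩

theorem HasMinor.comap {X : SimpleGraph ι} {Y : SimpleGraph κ} (h : HasMinor G Y) (φ : X →g Y)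
    (hφ : Function.Injective φ) : HasMinor G X :=
  let ⟨U, hne, hconn, hdisj, hadj⟩ := h
  ⟨U ∘ φ, fun x => hne (φ x), fun x => hconn (φ x), fun _ _ hxy => hdisj (hφ.ne hxy),
    fun _ _ hxy => hadj (φ.map_adj hxy)⟩

theorem finite_edgeSet_map (hG : G.edgeSet.Finite) (q : V → V') : (G.map q).edgeSet.Finite := by
  refine (hG.image (Sym2.map q)).subset fun e => ?_
  induction e with | _ x y
  rw [SimpleGraph.mem_edgeSet, SimpleGraph.map_adj']
  rintro ⟨-, a, b, hab, rfl, rfl⟩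
  exact ⟨s(a, b), hab, rfl⟩

end Maps

/-! ### Coarse embeddings -/

/-- The properties of quasi-isometries that the argument needs: the images of adjacent vertices are
at distance at most `R`, and vertices whose images are at distance at most `2 * R` are at distance
at most `K`, so that `R`-balls around the images of `K`-distant vertices are disjoint. -/
structure IsCoarseEmbedding {V V' : Type*} (G : SimpleGraph V) (H : SimpleGraph V') (f : V → V')
    (R K : ℕ) : Prop where
  edist_le_of_adj : ∀ u v, G.Adj u v → H.edist (f u) (f v) ≤ R
  edist_le_of_edist_le : ∀ u v, H.edist (f u) (f v) ≤ (2 * R : ℕ) → G.edist u v ≤ K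

namespace IsCoarseEmbedding

variable {V V' : Type*} {G : SimpleGraph V} {H : SimpleGraph V'} {f : V → V'} {R K : ℕ}

theorem of_edist_le {M A : ℕ} (upper : ∀ u v, H.edist (f u) (f v) ≤ M * G.edist u v + A)
    (lower : ∀ u v, G.edist u v ≤ M * H.edist (f u) (f v) + M * A) :
    IsCoarseEmbedding G H f (M + A) (M * (2 * (M + A)) + M * A) where
  edist_le_of_adj u v huv := by
    simpa [SimpleGraph.edist_eq_one_iff_adj.2 huv] using upper u v
  edist_le_of_edist_le u v huv := (lower u v).trans (by push_cast at huv ⊢; gcongr)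

theorem edist_le_of_mem_gBall (hf : IsCoarseEmbedding G H f R K) {u v : V} {x : V'}
    (hu : H.edist (f u) x ≤ R) (hv : H.edist (f v) x ≤ R) : G.edist u v ≤ K := by
  refine hf.edist_le_of_edist_le u v ((SimpleGraph.edist_triangle (v := x)).trans ?_)
  rw [SimpleGraph.edist_comm (u := x), two_mul, Nat.cast_add]
  exact add_le_add hu hv

theorem exists_finite_edgeSet [Finite V] (hf : IsCoarseEmbedding G H f R K) :
    ∃ H₀ ≤ H, H₀.edgeSet.Finite ∧ IsCoarseEmbedding G H₀ f R K := by
  choose p hp using fun e : {e : V × V // G.Adj e.1 e.2} =>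
    SimpleGraph.exists_walk_of_edist_ne_top
      (ne_top_of_le_ne_top (ENat.natCast_ne_top R) (hf.edist_le_of_adj _ _ e.2))
  let E : Set (Sym2 V') := ⋃ e, {s | s ∈ (p e).edges}
  have hEH : E ⊆ H.edgeSet := Set.iUnion_subset fun e s hs => (p e).edges_subset_edgeSet hs
  have hedges : (SimpleGraph.fromEdgeSet E).edgeSet = E := by
    rw [SimpleGraph.edgeSet_fromEdgeSet, sdiff_eq_left]
    exact Set.disjoint_left.2 fun s hs => H.not_isDiag_of_mem_edgeSet (hEH hs)
  have hle : SimpleGraph.fromEdgeSet E ≤ H := by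
    rwa [← SimpleGraph.edgeSet_subset_edgeSet, hedges]
  refine ⟨SimpleGraph.fromEdgeSet E, hle, ?_, fun u v huv => ?_, fun u v huv =>
    hf.edist_le_of_edist_le u v ((SimpleGraph.edist_anti hle).trans huv)⟩
  · rw [hedges]
    exact Set.finite_iUnion fun e => List.finite_toSet _
  · have hmem : ∀ s ∈ (p ⟨(u, v), huv⟩).edges, s ∈ (SimpleGraph.fromEdgeSet E).edgeSet :=
      fun s hs => hedges.symm.subset (Set.mem_iUnion.2 ⟨_, hs⟩)
    calc (SimpleGraph.fromEdgeSet E).edist (f u) (f v)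
        ≤ ((p ⟨(u, v), huv⟩).transfer _ hmem).length := SimpleGraph.edist_le _
      _ = H.edist (f u) (f v) := by rw [SimpleGraph.Walk.length_transfer, hp]
      _ ≤ R := hf.edist_le_of_adj u v huv

end IsCoarseEmbedding

/-! ### Fat ladders -/

/-- The indices of the hubs of a ladder with levels `0, …, L`. -/
def hubIdx (N L : ℕ) : Set (ℕ × ℕ) := {p | p.1 ≤ L ∧ p.2 ≤ N ^ (L - p.1)}

theorem mem_hubIdx_of_gluing {N L j i τ e : ℕ} (hj : j < L) (hi : i < N ^ (L - (j + 1)))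
    (hτ : τ ≤ N) (he : e ≤ j) : (e, (i * N + τ) * N ^ (j - e)) ∈ hubIdx N L := by
  refine ⟨he.trans hj.le, ?_⟩
  calc (i * N + τ) * N ^ (j - e) ≤ ((i + 1) * N) * N ^ (j - e) := by
        rw [Nat.succ_mul i]
        gcongr
    _ ≤ N ^ (L - (j + 1)) * N * N ^ (j - e) := by
        gcongr
        exact hi
    _ = N ^ (L - e) := by
        rw [← pow_succ, ← pow_add]
        congr 1
        omega

/-- The vertices of a piece and the hubs, restricted to those whose nearest hub is in `T`. -/
def fatPieceWith {V : Type*} (hubs : Set V) (nearest : V → ℕ × ℕ) (piece : Set V)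
    (T : Set (ℕ × ℕ)) : Set V :=
  {u | (u ∈ piece ∨ u ∈ hubs) ∧ nearest u ∈ T}

/-- A ladder in `G` whose hubs are so far apart that the `K`-balls around them can be contracted,
and whose pieces are at distance more than `K` outside these balls. The map `nearest` is only
meaningful near hubs. -/
structure FatLadder {V : Type*} (G : SimpleGraph V) (K k N L : ℕ) where
  hub : ℕ × ℕ → V
  nearest : V → ℕ × ℕ
  piece : ℕ × ℕ → Set V
  leaf : ℕ × ℕ → ℕ → V
  N_add_one : N + 1 = 2 * k
  nearest_eq : ∀ {p u}, p ∈ hubIdx N L → G.edist (hub p) u ≤ (2 * K : ℕ) → nearest u = p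
  piece_unique : ∀ {u u' p p'}, u ∈ piece p → u' ∈ piece p' →
    (∀ q ∈ hubIdx N L, K < G.edist (hub q) u) → G.edist u u' ≤ K → p = p'
  rail : ∀ {i}, i < N ^ L →
    ReachableIn G (fatPieceWith (hub '' hubIdx N L) nearest (piece (0, i)) (ends (0, i)))
      (hub (0, i)) (hub (0, i + 1))
  leaf_zero : ∀ {j i}, j < L → i < N ^ (L - (j + 1)) → leaf (j + 1, i) 0 = hub (j + 1, i)
  leaf_last : ∀ {j i}, j < L → i < N ^ (L - (j + 1)) →
    leaf (j + 1, i) (k - 1) = hub (j + 1, i + 1)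
  spine : ∀ {j i κ τ e}, j < L → i < N ^ (L - (j + 1)) → κ < k → Attached κ τ → τ ≤ N → e ≤ j →
    ReachableIn G (fatPieceWith (hub '' hubIdx N L) nearest (piece (j + 1, i))
        (insert (e, (i * N + τ) * N ^ (j - e)) (ends (j + 1, i))))
      (leaf (j + 1, i) κ) (hub (e, (i * N + τ) * N ^ (j - e)))

namespace FatLadder

variable {V V' : Type*} {G : SimpleGraph V} {H : SimpleGraph V'} {f : V → V'} {R K k N L : ℕ}
  (Φ : FatLadder G K k N L) {p p' : ℕ × ℕ} {T : Set (ℕ × ℕ)} {x : V'}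

variable (H f R) in
/-- The part of `H` that is contracted to the hub `p`. -/
def blob (p : ℕ × ℕ) : Set V' := gBall H (f '' gBall G {Φ.hub p} K) R

variable (H f R) in
open Classical in
/-- The map contracting the blobs of the hubs and fixing all other vertices. -/
noncomputable def contraction (x : V') : ℕ × ℕ ⊕ V' :=
  if h : ∃ p ∈ hubIdx N L, x ∈ Φ.blob H f R p then Sum.inl h.choose else Sum.inr x

variable {Φ} (hf : IsCoarseEmbedding G H f R K)

include hf

theorem nearest_eq_of_mem_blob (hp : p ∈ hubIdx N L) (hx : x ∈ Φ.blob H f R p) {u : V}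
    (hu : H.edist (f u) x ≤ R) : Φ.nearest u = p := by
  obtain ⟨_, ⟨v, ⟨_, rfl, hv⟩, rfl⟩, hvx⟩ := hx
  refine Φ.nearest_eq hp ((SimpleGraph.edist_triangle (v := v)).trans ?_)
  rw [two_mul, Nat.cast_add]
  exact add_le_add hv (hf.edist_le_of_mem_gBall hvx hu)

theorem eq_of_mem_blob (hp : p ∈ hubIdx N L) (hp' : p' ∈ hubIdx N L)
    (hx : x ∈ Φ.blob H f R p) (hx' : x ∈ Φ.blob H f R p') : p = p' := by
  obtain ⟨_, ⟨u, -, rfl⟩, hu⟩ := id hx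
  rw [← nearest_eq_of_mem_blob hf hp hx hu, nearest_eq_of_mem_blob hf hp' hx' hu]

theorem contraction_eq_inl (hp : p ∈ hubIdx N L) (hx : x ∈ Φ.blob H f R p) :
    Φ.contraction H f R x = Sum.inl p := by
  have h : ∃ p ∈ hubIdx N L, x ∈ Φ.blob H f R p := ⟨p, hp, hx⟩
  rw [contraction, dif_pos h, eq_of_mem_blob hf h.choose_spec.1 hp h.choose_spec.2 hx]

theorem setConn_preimage_contraction (y : ℕ × ℕ ⊕ V')
    (hy : y ∈ Set.range (Φ.contraction H f R)) :
    SetConn H (Φ.contraction H f R ⁻¹' {y}) := by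
  obtain ⟨x, rfl⟩ := hy
  by_cases h : ∃ p ∈ hubIdx N L, x ∈ Φ.blob H f R p
  · obtain ⟨p, hp, hx⟩ := h
    convert (setConn_gBall_singleton (Φ.hub p) K).image hf.edist_le_of_adj using 1
    ext z
    rw [contraction_eq_inl hf hp hx]
    refine ⟨fun hz => ?_, contraction_eq_inl hf hp⟩
    by_cases h : ∃ p ∈ hubIdx N L, z ∈ Φ.blob H f R p
    · obtain ⟨p', hp', hz'⟩ := h
      obtain rfl : p' = p := by simpa [contraction_eq_inl hf hp' hz'] using hz
      exact hz'
    · simp [contraction, h] at hz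
  · convert setConn_singleton x using 1
    ext z
    by_cases h' : ∃ p ∈ hubIdx N L, z ∈ Φ.blob H f R p
    · have hzx : z ≠ x := fun hzx => h (hzx ▸ h')
      simp [contraction, h, h', hzx]
    · simp [contraction, h, h']

theorem contraction_mem_pieceWith
    (hx : x ∈ gBall H (f '' fatPieceWith (Φ.hub '' hubIdx N L) Φ.nearest (Φ.piece p) T) R) :
    Φ.contraction H f R x ∈ pieceWith
      (fun p => gBall H (f '' Φ.piece p) R \ ⋃ q ∈ hubIdx N L, Φ.blob H f R q) p T := by
  obtain ⟨_, ⟨u, ⟨hu, huT⟩, rfl⟩, hux⟩ := hx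
  by_cases h : ∃ q ∈ hubIdx N L, x ∈ Φ.blob H f R q
  · obtain ⟨q, hq, hxq⟩ := h
    rw [contraction_eq_inl hf hq hxq]
    exact .inr ⟨q, nearest_eq_of_mem_blob hf hq hxq hux ▸ huT, rfl⟩
  · rw [contraction, dif_neg h]
    refine .inl ⟨x, ⟨?_, by simpa using h⟩, rfl⟩
    rcases hu with hu | ⟨q, hq, rfl⟩
    · exact ⟨_, ⟨u, hu, rfl⟩, hux⟩
    · exact absurd ⟨q, hq, _, ⟨_, subset_gBall rfl, rfl⟩, hux⟩ h

theorem reachableIn_contraction {a b : V}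
    (h : ReachableIn G (fatPieceWith (Φ.hub '' hubIdx N L) Φ.nearest (Φ.piece p) T) a b) :
    ReachableIn (H.map (Φ.contraction H f R)) (pieceWith
      (fun p => gBall H (f '' Φ.piece p) R \ ⋃ q ∈ hubIdx N L, Φ.blob H f R q) p T)
      (Φ.contraction H f R (f a)) (Φ.contraction H f R (f b)) := by
  refine ((h.image hf.edist_le_of_adj).map _).mono_set ?_
  rintro _ ⟨x, hx, rfl⟩
  exact contraction_mem_pieceWith hf hx

theorem contraction_hub (hp : p ∈ hubIdx N L) :
    Φ.contraction H f R (f (Φ.hub p)) = Sum.inl p :=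
  contraction_eq_inl hf hp (subset_gBall ⟨_, subset_gBall rfl, rfl⟩)

variable (Φ)

/-- The image of a fat ladder under a coarse embedding and the contraction of the blobs. -/
noncomputable def toLadder : Ladder (H.map (Φ.contraction H f R)) k N L where
  piece p := gBall H (f '' Φ.piece p) R \ ⋃ q ∈ hubIdx N L, Φ.blob H f R q
  leaf p κ := Φ.contraction H f R (f (Φ.leaf p κ))
  N_add_one := Φ.N_add_one
  piece_unique := by
    rintro x p p' ⟨⟨_, ⟨u, hu, rfl⟩, hux⟩, hx⟩ ⟨⟨_, ⟨u', hu', rfl⟩, hux'⟩, -⟩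
    refine Φ.piece_unique hu hu' (fun q hq => not_le.1 fun hqu => hx ?_)
      (hf.edist_le_of_mem_gBall hux hux')
    exact Set.mem_biUnion hq ⟨_, ⟨u, ⟨_, rfl, hqu⟩, rfl⟩, hux⟩
  rail {i} hi := by
    have h := reachableIn_contraction hf (Φ.rail hi)
    rwa [contraction_hub hf ⟨Nat.zero_le L, hi.le⟩, contraction_hub hf ⟨Nat.zero_le L, hi⟩] at h
  leaf_zero hj hi := by rw [Φ.leaf_zero hj hi, contraction_hub hf ⟨hj, hi.le⟩]
  leaf_last hj hi := by rw [Φ.leaf_last hj hi, contraction_hub hf ⟨hj, hi⟩]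
  spine {j i κ τ e} hj hi hκ hκτ hτ he := by
    have h := reachableIn_contraction hf (Φ.spine hj hi hκ hκτ hτ he)
    rwa [contraction_hub hf (mem_hubIdx_of_gluing hj hi hτ he)] at h

theorem hasMinor_top [Finite V] {j : ℕ} (Φ : FatLadder G K k N (j + 2)) (hj : 1 ≤ j)
    (hN : 2 * (j + 1) ≤ N) : HasMinor H (⊤ : SimpleGraph (Fin (j + 1))) := by
  obtain ⟨H₀, hle, hfin, hf₀⟩ := hf.exists_finite_edgeSet
  refine HasMinor.mono (HasMinor.of_map ((Φ.toLadder hf₀).hasMinor_top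
    (finite_edgeSet_map hfin _) hN) (setConn_preimage_contraction hf₀) fun a => ?_) hle
  have : Nontrivial (Fin (j + 1)) := Fin.nontrivial_iff_two_le.2 (by omega)
  obtain ⟨b, hb⟩ := exists_ne a
  exact ⟨b, hb.symm⟩

end FatLadder

/-! ### Functions on balls -/

section Balls

variable {V α : Type*} {G : SimpleGraph V} {u v : V} {r : ℕ}

theorem le_add_of_edist_le {φ : V → ℕ} (hφ : ∀ x y, G.Adj x y → φ y ≤ φ x + 1)
    (h : G.edist u v ≤ r) : φ v ≤ φ u + r := by
  obtain ⟨p, hp⟩ := SimpleGraph.exists_walk_of_edist_ne_top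
    (ne_top_of_le_ne_top (ENat.natCast_ne_top r) h)
  have hlen : p.length ≤ r := by exact_mod_cast hp ▸ h
  suffices φ v ≤ φ u + p.length by omega
  clear hp hlen h
  induction p with
  | nil => simp
  | cons hadj p ih =>
    have := hφ _ _ hadj
    rw [SimpleGraph.Walk.length_cons]
    omega

theorem eq_of_edist_le {φ : V → α}
    (hφ : ∀ x y, G.edist u x ≤ r → G.edist u y ≤ r → G.Adj x y → φ x = φ y)
    (h : G.edist u v ≤ r) : φ u = φ v := by
  have hreach := reachableIn_gBall h
  clear h
  induction hreach with
  | refl _ => rfl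
  | tail hux hadj hy ih =>
    obtain ⟨_, rfl, hx⟩ := hux.mem_right
    obtain ⟨_, rfl, hy⟩ := hy
    exact ih.trans (hφ _ _ hx hy hadj)

end Balls

end CGT

namespace Ghdm

open CGT

/-! ### The graphs `G_{h,d,m}` -/

section Coordinates

variable {h d m L : ℕ} {a b : Raw} {p : ℕ × ℕ}

theorem NN_add_one (h : ℕ) : NN h + 1 = 2 * 2 ^ h := by
  rw [NN, pow_succ']
  have := Nat.one_le_two_pow (n := h)
  omega

theorem NN_pos (h : ℕ) : 0 < NN h := by
  have := NN_add_one h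
  have := Nat.one_le_two_pow (n := h)
  omega

theorem replicate_false_ne_true (hh : 1 ≤ h) :
    List.replicate h false ≠ List.replicate h true := fun heq => by
  simp [Nat.one_le_iff_ne_zero.1 hh] at heq

@[simp]
theorem length_leafPos (h k : ℕ) : (leafPos h k).length = h := by
  simp [leafPos, natToBits]

theorem leafPos_one (h : ℕ) : leafPos h 1 = List.replicate h false := by
  refine List.ext_getElem (by simp) fun c hc _ => ?_
  simp [leafPos, natToBits]

theorem leafPos_two_pow (h : ℕ) : leafPos h (2 ^ h) = List.replicate h true := by
  refine List.ext_getElem (by simp) fun c hc _ => ?_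
  rw [length_leafPos] at hc
  simp only [leafPos, natToBits, Nat.testBit_two_pow_sub_one, List.getElem_map,
    List.getElem_range, List.getElem_replicate, decide_eq_true_eq]
  omega

theorem finite_verts (h d m : ℕ) : (Verts h d m).Finite := by
  have htree : ((fun x : ℕ × ℕ × List Bool => Raw.tree x.1 x.2.1 x.2.2) ''
      (Set.Iic m ×ˢ Set.Iic (NN h ^ m) ×ˢ {p | p.length ≤ h})).Finite :=
    ((Set.finite_Iic _).prod ((Set.finite_Iic _).prod (List.finite_length_le Bool h))).image _
  have hspine : ((fun x : ℕ × ℕ × ℕ × ℕ × ℕ × ℕ =>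
      Raw.spine x.1 x.2.1 x.2.2.1 x.2.2.2.1 x.2.2.2.2.1 x.2.2.2.2.2) ''
      (Set.Iic m ×ˢ Set.Iic (NN h ^ m) ×ˢ Set.Iic (2 ^ h) ×ˢ Set.Iic (2 ^ (h + 1)) ×ˢ
        Set.Iic m ×ˢ Set.Iic d)).Finite :=
    ((Set.finite_Iic _).prod ((Set.finite_Iic _).prod ((Set.finite_Iic _).prod
      ((Set.finite_Iic _).prod ((Set.finite_Iic _).prod (Set.finite_Iic _)))))).image _
  have hpow : ∀ {i j}, i ≤ NN h ^ (m - j) → i ≤ NN h ^ m := fun hi =>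
    hi.trans (Nat.pow_le_pow_right (NN_pos h) (Nat.sub_le _ _))
  refine ((((Set.finite_Iic ((d + 1) * NN h ^ (m - 1))).image Raw.path).union htree).union
    hspine).subset ?_
  rintro (k | ⟨j, i, p⟩ | ⟨j, i, k, t, e, s⟩) ha
  · exact .inl (.inl ⟨k, ha, rfl⟩)
  · obtain ⟨-, hj, -, hi, hp, -⟩ := ha
    exact .inl (.inr ⟨(j, i, p), ⟨hj, hpow hi, hp⟩, rfl⟩)
  · obtain ⟨-, hj, -, hi, -, hk, -, -, ht, -, he, -, hs⟩ := ha
    exact .inr ⟨(j, i, k, t, e, s), ⟨hj, hpow hi, hk, ht, by simp; omega, hs⟩, rfl⟩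

instance : Finite (Verts h d m) := finite_verts h d m

/-- The code of the hub `(e, x)`: the anchors of the base path for `e = 0`, and otherwise the
extreme leaves of the trees of level `e + 1`. -/
def hubRaw (h d : ℕ) : ℕ × ℕ → Raw
  | (0, x) => .path (x * (d + 1))
  | (e + 1, 0) => .tree (e + 2) 1 (List.replicate h false)
  | (e + 1, x + 1) => .tree (e + 2) (x + 1) (List.replicate h true)

theorem VsetElem_succ (h d jv g e : ℕ) :
    VsetElem h d jv g (e + 1) = hubRaw h d (e, (g - 1) * NN h ^ (jv - (e + 1))) := by
  cases e with
  | zero => simp [VsetElem, hubRaw]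
  | succ e =>
    rw [VsetElem, if_neg (by omega)]
    split_ifs with hx
    · rw [hx, hubRaw]
    · obtain ⟨x, hx⟩ := Nat.exists_eq_succ_of_ne_zero hx
      rw [hx, hubRaw]

theorem canon_hubRaw (hh : 1 ≤ h) (m : ℕ) (p : ℕ × ℕ) :
    canon h m (hubRaw h d p) = hubRaw h d p := by
  have := replicate_false_ne_true hh
  rcases p with ⟨_ | e, _ | x⟩ <;> simp [hubRaw, canon, this.symm, Nat.one_le_iff_ne_zero.1 hh]

theorem canon_tree_replicate_false (hh : 1 ≤ h) (m e x : ℕ) :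
    canon h m (.tree (e + 2) (x + 1) (List.replicate h false)) = hubRaw h d (e + 1, x) := by
  cases x <;> simp [hubRaw, canon, Nat.one_le_iff_ne_zero.1 hh]

theorem valid_hubRaw_iff (hh : 1 ≤ h) :
    Valid h d (L + 1) (hubRaw h d p) ↔ p ∈ hubIdx (NN h) L := by
  have hne := replicate_false_ne_true hh
  rcases p with ⟨_ | e, _ | x⟩
  · simp [hubRaw, Valid, hubIdx]
  · simp [hubRaw, Valid, hubIdx, mul_comm (d + 1)]
  · have hpow : 1 ≤ NN h ^ (L - (e + 1)) := Nat.pow_pos (NN_pos h)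
    simp [hubRaw, Valid, hubIdx, Nat.one_le_iff_ne_zero.1 hh, hpow]
  · simp [hubRaw, Valid, hubIdx, Nat.one_le_iff_ne_zero.1 hh, hne.symm]

/-- The distance of a tree vertex from its root; all other vertices count as leaves. -/
def height (h : ℕ) : Raw → ℕ
  | .tree _ _ p => p.length
  | _ => h

/-- The distance along the base path or a spine to the nearer end of the segment or spine. -/
def depth (d : ℕ) : Raw → ℕ
  | .path k => min (k % (d + 1)) (d + 1 - k % (d + 1))
  | .tree _ _ _ => 0
  | .spine _ _ _ _ _ s => min s (d + 1 - s)

/-- The index of the tree or of the segment of the base path to which a vertex belongs; a spine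
belongs to the tree at whose leaf it starts. -/
def label (d : ℕ) : Raw → ℕ × ℕ
  | .path k => (0, k / (d + 1))
  | .tree j i _ => (j - 1, i - 1)
  | .spine j i _ _ _ _ => (j - 1, i - 1)

/-- The index of the extreme leaf on the same side of its tree as the position `p`. -/
def extremeLeaf (j i : ℕ) (p : List Bool) : ℕ × ℕ :=
  (j - 1, if p.head? = some true then i else i - 1)

/-- The hub of a ball around a hub, as a function of the vertices of that ball. -/
def nearestHub (h d : ℕ) : Raw → ℕ × ℕ
  | .path k => (0, if k % (d + 1) ≤ d / 2 then k / (d + 1) else k / (d + 1) + 1)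
  | .tree j i p => extremeLeaf j i p
  | .spine j i k t e s => if s ≤ d / 2 then extremeLeaf j i (leafPos h k)
      else (e - 1, ((i - 1) * NN h + t - 1) * NN h ^ (j - 1 - e))

@[simp]
theorem height_VsetElem (h d jv g e : ℕ) : height h (VsetElem h d jv g e) = h := by
  rw [VsetElem]
  split_ifs <;> simp [height]

@[simp]
theorem depth_VsetElem (h d jv g e : ℕ) : depth d (VsetElem h d jv g e) = 0 := by
  rw [VsetElem]
  split_ifs <;> simp [depth]

theorem head?_replicate_of_pos (hh : 1 ≤ h) (b : Bool) : (List.replicate h b).head? = some b := by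
  obtain ⟨h, rfl⟩ := Nat.exists_eq_add_of_le' hh
  simp [List.replicate_succ]

theorem nearestHub_VsetElem (hh : 1 ≤ h) (jv g e : ℕ) :
    nearestHub h d (VsetElem h d jv g e) = (e - 1, (g - 1) * NN h ^ (jv - e)) := by
  rw [VsetElem]
  split_ifs with he hx <;> simp_all [nearestHub, extremeLeaf, head?_replicate_of_pos hh]

theorem hubRaw_eq_VsetElem (h d : ℕ) (p : ℕ × ℕ) :
    hubRaw h d p = VsetElem h d (p.1 + 1) (p.2 + 1) (p.1 + 1) := by
  simp [VsetElem_succ]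

theorem height_canon (a : Raw) : height h (canon h m a) = height h a := by
  rcases a with k | ⟨j, i, p⟩ | _
  · rfl
  · rw [canon]
    split_ifs with hp hleft <;> simp_all [height]
  · rfl

theorem depth_canon (a : Raw) : depth d (canon h m a) = depth d a := by
  rcases a with k | ⟨j, i, p⟩ | _
  · rfl
  · rw [canon]
    split_ifs <;> rfl
  · rfl

theorem nearestHub_canon (hh : 1 ≤ h) (ha : 1 ≤ height h a) :
    nearestHub h d (canon h m a) = nearestHub h d a := by
  rcases a with k | ⟨j, i, p⟩ | _
  · rfl
  · have hp : p ≠ [] := List.length_pos_iff.1 ha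
    rw [canon, if_neg hp]
    split_ifs with hleft
    · simp [nearestHub, extremeLeaf, hleft.1, head?_replicate_of_pos hh]
    · rfl
  · rfl

theorem canon_eq_self_or_hubRaw (ha : 1 ≤ height h a) (hv : Valid h d m (canon h m a)) :
    canon h m a = a ∨ ∃ p, canon h m a = hubRaw h d p := by
  rcases a with k | ⟨j, i, p⟩ | _
  · exact .inl rfl
  · have hp : p ≠ [] := List.length_pos_iff.1 ha
    rw [canon, if_neg hp] at hv ⊢
    split_ifs at hv ⊢ with hleft
    · obtain ⟨e, rfl⟩ := Nat.exists_eq_add_of_le' hv.1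
      obtain ⟨x, rfl⟩ := Nat.exists_eq_add_of_lt hleft.2
      exact .inr ⟨(e + 1, x + 1), by simp [hubRaw, add_comm]⟩
    · exact .inl rfl
  · exact .inl rfl

/-! ### Behaviour along edges -/

theorem div_mod_succ (k d : ℕ) :
    ((k + 1) / (d + 1) = k / (d + 1) ∧ (k + 1) % (d + 1) = k % (d + 1) + 1) ∨
      ((k + 1) / (d + 1) = k / (d + 1) + 1 ∧ (k + 1) % (d + 1) = 0 ∧ k % (d + 1) = d) := by
  have hd : 0 < d + 1 := d.succ_pos
  have hlt := Nat.mod_lt k hd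
  have hk := Nat.div_add_mod k (d + 1)
  rcases Nat.lt_or_ge (k % (d + 1)) d with hr | hr
  · exact .inl ((Nat.div_mod_unique hd).2 ⟨by omega, by omega⟩)
  · have hunique := (Nat.div_mod_unique (a := k + 1) (d := k / (d + 1) + 1) (c := 0) hd).2
      ⟨by rw [Nat.mul_add]; omega, hd⟩
    exact .inr ⟨hunique.1, hunique.2, by omega⟩

theorem depth_le_of_rawAdj (hab : rawAdj h d a b) :
    depth d b ≤ depth d a + 1 ∧ depth d a ≤ depth d b + 1 := by
  cases hab with
  | base k =>
    have := Nat.mod_lt k d.succ_pos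
    simp only [depth]
    rcases div_mod_succ k d with ⟨-, hr⟩ | ⟨-, hr, hr'⟩ <;> omega
  | toV =>
    rw [depth_VsetElem, depth]
    omega
  | short =>
    rw [depth_VsetElem, depth]
    omega
  | _ => simp only [depth]; omega

theorem height_le_of_rawAdj (hab : rawAdj h d a b) :
    height h b ≤ height h a + 1 ∧ height h a ≤ height h b + 1 := by
  cases hab with
  | child =>
    simp only [height, List.length_append, List.length_singleton]
    omega
  | toV => rw [height_VsetElem]; simp [height]
  | short => rw [height_VsetElem]; simp [height]
  | _ => simp [height]

theorem nearestHub_eq_of_rawAdj (hh : 1 ≤ h) (hab : rawAdj h d a b) (ha : 1 ≤ height h a)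
    (hda : depth d a < d / 2) (hdb : depth d b < d / 2) : nearestHub h d a = nearestHub h d b := by
  cases hab with
  | base k =>
    have := Nat.mod_lt k d.succ_pos
    simp only [depth, nearestHub] at hda hdb ⊢
    rcases div_mod_succ k d with ⟨hq, hr⟩ | ⟨hq, hr, hr'⟩
    · rw [hq, hr] at *
      congr 1
      split_ifs <;> omega
    · rw [hq, hr, hr'] at *
      congr 1
      split_ifs <;> omega
  | child j i p b hp =>
    have hne : p ≠ [] := List.length_pos_iff.1 ha
    simp [nearestHub, extremeLeaf, List.head?_append_of_ne_nil _ hne]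
  | step j i k t e s =>
    simp only [depth] at hda hdb
    have : s ≤ d / 2 ↔ s + 1 ≤ d / 2 := by omega
    simp [nearestHub, this]
  | toLeaf j i k t e =>
    have : 1 ≤ d / 2 := by omega
    simp [nearestHub, this]
  | toV j i k t e =>
    have : ¬ d ≤ d / 2 := by omega
    rw [nearestHub_VsetElem hh, nearestHub, if_neg this]
  | short j i k t e hd => omega

theorem label_eq_of_rawAdj (hab : rawAdj h d a b) (hv : Valid h d m (canon h m a))
    (hb : ∀ p, b ≠ hubRaw h d p) : label d a = label d b := by
  have hV : ∀ {jv g e}, 1 ≤ e → b ≠ VsetElem h d jv g e := by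
    intro jv g e he
    obtain ⟨e, rfl⟩ := Nat.exists_eq_add_of_le' he
    rw [VsetElem_succ]
    exact hb _
  cases hab with
  | base k =>
    rcases div_mod_succ k d with ⟨hq, -⟩ | ⟨-, hr, -⟩
    · rw [label, label, hq]
    · refine absurd ?_ (hb (0, (k + 1) / (d + 1)))
      rw [hubRaw, Nat.div_mul_cancel (Nat.dvd_of_mod_eq_zero hr)]
  | toV =>
    obtain ⟨-, -, -, -, -, -, -, -, -, he, -⟩ := hv
    exact absurd rfl (hV he)
  | short j i k t e _ _ _ _ _ _ he => exact absurd rfl (hV he)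
  | _ => rfl

theorem adj_induction {P : Raw → Raw → Prop} (hP : ∀ a b, P a b → P b a)
    (hraw : ∀ a b, rawAdj h d a b → Valid h d m (canon h m a) → Valid h d m (canon h m b) →
      P (canon h m a) (canon h m b)) {u v : Verts h d m} (huv : (G h d m).Adj u v) : P u v := by
  obtain ⟨u, hu⟩ := u
  obtain ⟨v, hv⟩ := v
  obtain ⟨-, ⟨a, b, hab, rfl, rfl⟩ | ⟨a, b, hab, rfl, rfl⟩⟩ := huv
  · exact hraw a b hab hu hv
  · exact hP _ _ (hraw a b hab hv hu)

variable {u v : Verts h d m}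

theorem depth_le_of_adj (huv : (G h d m).Adj u v) : depth d v ≤ depth d u + 1 := by
  refine (adj_induction (P := fun a b => depth d b ≤ depth d a + 1 ∧ depth d a ≤ depth d b + 1)
    (fun _ _ => And.symm) (fun a b hab _ _ => ?_) huv).1
  rw [depth_canon, depth_canon]
  exact depth_le_of_rawAdj hab

theorem le_height_of_adj (huv : (G h d m).Adj u v) : h - height h v ≤ h - height h u + 1 := by
  have := (adj_induction
    (P := fun a b => height h b ≤ height h a + 1 ∧ height h a ≤ height h b + 1)
    (fun _ _ => And.symm) (fun a b hab _ _ => by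
      rw [height_canon, height_canon]
      exact height_le_of_rawAdj hab) huv).2
  omega

theorem nearestHub_eq_of_adj (hh : 1 ≤ h) (huv : (G h d m).Adj u v) (hu : 1 ≤ height h u)
    (hv : 1 ≤ height h v) (hdu : depth d u < d / 2) (hdv : depth d v < d / 2) :
    nearestHub h d u = nearestHub h d v := by
  refine adj_induction (P := fun a b => 1 ≤ height h a → 1 ≤ height h b → depth d a < d / 2 →
      depth d b < d / 2 → nearestHub h d a = nearestHub h d b)
    (fun a b hab ha hb hda hdb => (hab hb ha hdb hda).symm) (fun a b hab _ _ => ?_)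
    huv hu hv hdu hdv
  simp only [height_canon, depth_canon]
  intro ha hb hda hdb
  rw [nearestHub_canon hh ha, nearestHub_canon hh hb]
  exact nearestHub_eq_of_rawAdj hh hab ha hda hdb

theorem label_eq_of_adj (huv : (G h d m).Adj u v) (hu : 1 ≤ height h u) (hv : 1 ≤ height h v)
    (hhu : ∀ p, u.1 ≠ hubRaw h d p) (hhv : ∀ p, v.1 ≠ hubRaw h d p) :
    label d u = label d v := by
  refine adj_induction (P := fun a b => 1 ≤ height h a → 1 ≤ height h b →
      (∀ p, a ≠ hubRaw h d p) → (∀ p, b ≠ hubRaw h d p) → label d a = label d b)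
    (fun a b hab ha hb hha hhb => (hab hb ha hhb hha).symm) (fun a b hab hva hvb => ?_)
    huv hu hv hhu hhv
  simp only [height_canon]
  intro ha hb hha hhb
  have hca := (canon_eq_self_or_hubRaw ha hva).resolve_right fun ⟨p, hp⟩ => hha p hp
  have hcb := (canon_eq_self_or_hubRaw hb hvb).resolve_right fun ⟨p, hp⟩ => hhb p hp
  rw [hcb] at hhb
  rw [hca, hcb]
  exact label_eq_of_rawAdj hab hva hhb

end Coordinates

/-! ### The fat ladder in `G_{h,d,m}` -/

variable {h d m L K : ℕ}

theorem nearestHub_hubRaw (hh : 1 ≤ h) (p : ℕ × ℕ) : nearestHub h d (hubRaw h d p) = p := by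
  simp [hubRaw_eq_VsetElem, nearestHub_VsetElem hh]

theorem height_hubRaw (p : ℕ × ℕ) : height h (hubRaw h d p) = h := by
  rw [hubRaw_eq_VsetElem, height_VsetElem]

theorem depth_hubRaw (p : ℕ × ℕ) : depth d (hubRaw h d p) = 0 := by
  rw [hubRaw_eq_VsetElem, depth_VsetElem]

theorem valid_canon_tree (hh : 1 ≤ h) {j i : ℕ} {p : List Bool} (hj : 2 ≤ j) (hjm : j ≤ m)
    (hi : 1 ≤ i) (hiN : i ≤ NN h ^ (m - j)) (hp : p.length ≤ h) :
    Valid h d m (canon h m (.tree j i p)) := by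
  have hne := replicate_false_ne_true hh
  rw [canon]
  split_ifs with hroot hleft
  · simp [Valid, hj.trans hjm]
  · refine ⟨hj, hjm, by omega, by omega, by simp, ?_, fun heq => absurd heq.symm hne⟩
    simp [Nat.one_le_iff_ne_zero.1 hh]
  · exact ⟨hj, hjm, hi, hiN, hp, fun h => absurd h hroot, fun hfalse _ =>
      hi.antisymm' (not_lt.1 fun hlt => hleft ⟨hfalse, hlt⟩)⟩

open Classical in
/-- The vertex of `G_{h,d,m}` with the given code, or the left end of the base path if the code is
not that of a vertex. -/
noncomputable def vert (h d m : ℕ) (a : Raw) : Verts h d m :=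
  if ha : Valid h d m (canon h m a) then ⟨canon h m a, ha⟩ else ⟨.path 0, Nat.zero_le _⟩

theorem coe_vert {a : Raw} (ha : Valid h d m (canon h m a)) :
    (vert h d m a : Raw) = canon h m a := by
  rw [vert, dif_pos ha]

theorem vert_congr {a b : Raw} (hab : canon h m a = canon h m b) : vert h d m a = vert h d m b := by
  by_cases ha : Valid h d m (canon h m a)
  · exact Subtype.ext (by rw [coe_vert ha, coe_vert (hab ▸ ha), hab])
  · rw [vert, vert, dif_neg ha, dif_neg (hab ▸ ha)]

theorem adj_vert {a b : Raw} (hab : rawAdj h d a b) (hne : canon h m a ≠ canon h m b)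
    (ha : Valid h d m (canon h m a)) (hb : Valid h d m (canon h m b)) :
    (G h d m).Adj (vert h d m a) (vert h d m b) := by
  refine ⟨?_, .inl ⟨a, b, hab, coe_vert ha, coe_vert hb⟩⟩
  change (vert h d m a : Raw) ≠ vert h d m b
  rwa [coe_vert ha, coe_vert hb]

/-- The hub `p` as a vertex of `G_{h,d,m}`. -/
noncomputable def hubVert (h d m : ℕ) (p : ℕ × ℕ) : Verts h d m := vert h d m (hubRaw h d p)

theorem coe_hubVert (hh : 1 ≤ h) {p : ℕ × ℕ} (hp : p ∈ hubIdx (NN h) L) :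
    (hubVert h d (L + 1) p : Raw) = hubRaw h d p := by
  have hcanon := canon_hubRaw (d := d) hh (L + 1) p
  rw [hubVert, coe_vert (by rwa [hcanon, valid_hubRaw_iff hh]), hcanon]

theorem eq_hubVert (hh : 1 ≤ h) {u : Verts h d (L + 1)} {p : ℕ × ℕ}
    (hu : (u : Raw) = hubRaw h d p) :
    p ∈ hubIdx (NN h) L ∧ u = hubVert h d (L + 1) p := by
  have hp := (valid_hubRaw_iff hh).1 (hu ▸ u.2 : Valid h d (L + 1) (hubRaw h d p))
  exact ⟨hp, Subtype.ext (hu.trans (coe_hubVert hh hp).symm)⟩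

theorem le_height_add_of_edist_le {u v : Verts h d m} {r : ℕ} (hu : height h u = h)
    (huv : (G h d m).edist u v ≤ r) : h ≤ height h v + r := by
  have := le_add_of_edist_le (φ := fun u : Verts h d m => h - height h u)
    (fun _ _ => le_height_of_adj) huv
  omega

theorem depth_le_add_of_edist_le {u v : Verts h d m} {r : ℕ} (huv : (G h d m).edist u v ≤ r) :
    depth d v ≤ depth d u + r :=
  le_add_of_edist_le (φ := fun u : Verts h d m => depth d u) (fun _ _ => depth_le_of_adj) huv

theorem nearestHub_eq_of_edist_le (hh : 2 * K < h) (hd : 2 * K < d / 2) {p : ℕ × ℕ}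
    {u : Verts h d (L + 1)} (hp : p ∈ hubIdx (NN h) L)
    (hpu : (G h d (L + 1)).edist (hubVert h d (L + 1) p) u ≤ (2 * K : ℕ)) :
    nearestHub h d u = p := by
  have hh1 : 1 ≤ h := by omega
  have hcoe := coe_hubVert (d := d) hh1 hp
  have hheight : ∀ x, (G h d (L + 1)).edist (hubVert h d (L + 1) p) x ≤ (2 * K : ℕ) →
      1 ≤ height h x := fun x hx => by
    have := le_height_add_of_edist_le (by rw [hcoe, height_hubRaw]) hx
    omega
  have hdepth : ∀ x, (G h d (L + 1)).edist (hubVert h d (L + 1) p) x ≤ (2 * K : ℕ) →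
      depth d x < d / 2 := fun x hx => by
    have := depth_le_add_of_edist_le hx
    rw [hcoe, depth_hubRaw] at this
    omega
  have hconst := eq_of_edist_le (φ := fun u : Verts h d (L + 1) => nearestHub h d u)
    (fun x y hx hy hxy => nearestHub_eq_of_adj hh1 hxy (hheight x hx) (hheight y hy)
      (hdepth x hx) (hdepth y hy)) hpu
  simp only [hcoe, nearestHub_hubRaw hh1] at hconst
  exact hconst.symm

theorem label_eq_of_edist_le (hh : K < h) {u v : Verts h d (L + 1)} (hu : height h u = h)
    (hfar : ∀ q ∈ hubIdx (NN h) L, K < (G h d (L + 1)).edist (hubVert h d (L + 1) q) u)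
    (huv : (G h d (L + 1)).edist u v ≤ K) : label d u = label d v := by
  have hheight : ∀ x, (G h d (L + 1)).edist u x ≤ K → 1 ≤ height h x := fun x hx => by
    have := le_height_add_of_edist_le hu hx
    omega
  have hhub : ∀ x : Verts h d (L + 1), (G h d (L + 1)).edist u x ≤ K →
      ∀ q, (x : Raw) ≠ hubRaw h d q := fun x hx q hxq => by
    obtain ⟨hq, rfl⟩ := eq_hubVert (by omega) hxq
    exact (hfar q hq).not_ge (SimpleGraph.edist_comm.trans_le hx)
  exact eq_of_edist_le (φ := fun u : Verts h d (L + 1) => label d u)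
    (fun x y hx hy hxy => label_eq_of_adj hxy (hheight x hx) (hheight y hy)
      (hhub x hx) (hhub y hy)) huv

/-- The piece `p` of `G_{h,d,m}`: a segment of the base path, or the leaves of a tree with their
spines. -/
def pieceVerts (h d m : ℕ) (p : ℕ × ℕ) : Set (Verts h d m) := {u | height h u = h ∧ label d u = p}

/-- The vertices of the piece `p` and the hubs whose nearest hub is in `T`. -/
def pieceVertsWith (h d L : ℕ) (p : ℕ × ℕ) (T : Set (ℕ × ℕ)) : Set (Verts h d (L + 1)) :=
  fatPieceWith (hubVert h d (L + 1) '' hubIdx (NN h) L) (fun u => nearestHub h d u)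
    (pieceVerts h d (L + 1) p) T

theorem vert_mem_pieceVertsWith (hh : 1 ≤ h) {a : Raw} {p : ℕ × ℕ} {T : Set (ℕ × ℕ)}
    (ha : Valid h d (L + 1) (canon h (L + 1) a)) (hheight : height h a = h)
    (hpiece : label d a = p ∨ ∃ q, a = hubRaw h d q) (hT : nearestHub h d a ∈ T) :
    vert h d (L + 1) a ∈ pieceVertsWith h d L p T := by
  have hcoe := coe_vert ha
  have hhub : (∃ q, canon h (L + 1) a = hubRaw h d q) →
      vert h d (L + 1) a ∈ hubVert h d (L + 1) '' hubIdx (NN h) L := fun ⟨q, hq⟩ =>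
    have := eq_hubVert hh (hcoe.trans hq)
    ⟨q, this.1, this.2.symm⟩
  refine ⟨?_, by simpa only [hcoe, nearestHub_canon hh (hh.trans_eq hheight.symm)] using hT⟩
  rcases hpiece with hlabel | ⟨q, rfl⟩
  · refine (canon_eq_self_or_hubRaw (hh.trans_eq hheight.symm) ha).imp (fun hself => ?_) hhub
    exact ⟨by rw [hcoe, hself, hheight], by rw [hcoe, hself, hlabel]⟩
  · exact .inr (hhub ⟨q, canon_hubRaw hh _ q⟩)

theorem reachableIn_rail (hh : 1 ≤ h) {i : ℕ} (hi : i < NN h ^ L) :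
    ReachableIn (G h d (L + 1)) (pieceVertsWith h d L (0, i) (ends (0, i)))
      (hubVert h d (L + 1) (0, i)) (hubVert h d (L + 1) (0, i + 1)) := by
  have hvalid : ∀ s ≤ d + 1,
      Valid h d (L + 1) (canon h (L + 1) (.path (i * (d + 1) + s))) := fun s hs => by
    calc i * (d + 1) + s ≤ (d + 1) * (i + 1) := by linarith
      _ ≤ (d + 1) * NN h ^ L := by
        gcongr
        exact hi
  have hchain := ReachableIn.of_chain (n := d + 1) (U := pieceVertsWith h d L (0, i) (ends (0, i)))
    (c := fun s => vert h d (L + 1) (.path (i * (d + 1) + s)))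
    (fun s hs => adj_vert (.base _) (by simp [canon]) (hvalid s hs.le) (hvalid (s + 1) hs))
    (fun s hs => ?_)
  · simpa only [hubVert, hubRaw, add_zero, Nat.succ_mul] using hchain
  have hmem := vert_mem_pieceVertsWith (p := (0, i)) (T := ends (0, i)) hh (hvalid s hs) rfl
  rcases hs.lt_or_eq with hs | rfl
  · have hdiv := (Nat.div_mod_unique (a := i * (d + 1) + s) (d := i) d.succ_pos).2
      ⟨by rw [Nat.succ_eq_add_one]; ring, hs⟩
    refine hmem (.inl (by rw [label, hdiv.1])) ?_
    rw [nearestHub, hdiv.1]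
    split_ifs <;> simp [ends]
  · refine hmem (.inr ⟨(0, i + 1), by rw [hubRaw, Nat.succ_mul]⟩) ?_
    rw [← Nat.succ_mul]
    simp [nearestHub, ends]

/-- The `s`-th vertex of the spine from leaf `κ` of the tree `(j + 1, i)` to the hub of level `e` in
the `τ`-th gluing set below that tree. -/
def spineRaw (h d j i κ τ e s : ℕ) : Raw :=
  if s = 0 then .tree (j + 2) (i + 1) (leafPos h (κ + 1))
  else if s ≤ d then .spine (j + 2) (i + 1) (κ + 1) (τ + 1) (e + 1) s
  else hubRaw h d (e, (i * NN h + τ) * NN h ^ (j - e))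

section Spine

variable {j i κ τ e s : ℕ}

theorem rawAdj_spineRaw (hd : 1 ≤ d) (hs : s ≤ d) :
    rawAdj h d (spineRaw h d j i κ τ e s) (spineRaw h d j i κ τ e (s + 1)) := by
  rcases Nat.eq_zero_or_pos s with rfl | hpos
  · simpa [spineRaw, hd] using .toLeaf _ _ _ _ _
  rcases hs.lt_or_eq with hlt | rfl
  · simpa [spineRaw, hpos.ne', hs, Nat.succ_le_of_lt hlt] using .step _ _ _ _ _ _
  · have htoV := rawAdj.toV (h := h) (d := s) (j + 2) (i + 1) (κ + 1) (τ + 1) (e + 1)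
    rw [VsetElem_succ] at htoV
    simpa [spineRaw, hpos.ne'] using htoV

theorem canon_spineRaw_ne (hh : 1 ≤ h) (hd : 1 ≤ d) (hs : s ≤ d) :
    canon h m (spineRaw h d j i κ τ e s) ≠ canon h m (spineRaw h d j i κ τ e (s + 1)) := by
  rcases Nat.eq_zero_or_pos s with rfl | hpos
  · simp only [spineRaw, canon, ↓reduceIte, zero_add, hd, one_ne_zero]
    split_ifs <;> simp
  rcases hs.lt_or_eq with hlt | rfl
  · simp [spineRaw, canon, hpos.ne', hs, Nat.succ_le_of_lt hlt]
  · rw [spineRaw, spineRaw, if_neg hpos.ne', if_pos le_rfl, if_neg s.succ_ne_zero,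
      if_neg s.not_succ_le_self, canon_hubRaw hh]
    generalize (e, (i * NN h + τ) * NN h ^ (j - e)) = p
    rcases p with ⟨_ | _, _ | _⟩ <;> simp [hubRaw, canon]

variable (hj : j < L) (hi : i < NN h ^ (L - (j + 1))) (hκ : κ < 2 ^ h)
  (hκτ : Attached κ τ) (hτ : τ ≤ NN h) (he : e ≤ j)

include hj hi hκ hκτ hτ he

theorem valid_canon_spineRaw (hh : 1 ≤ h) (s : ℕ) :
    Valid h d (L + 1) (canon h (L + 1) (spineRaw h d j i κ τ e s)) := by
  unfold spineRaw
  split_ifs with hs hsd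
  · refine valid_canon_tree hh (by omega) (by omega) (by omega) ?_ (length_leafPos _ _).le
    rwa [show L + 1 - (j + 2) = L - (j + 1) by omega]
  · have hN := NN_add_one h
    rw [Attached] at hκτ
    refine ⟨by omega, by omega, by omega, ?_, by omega, by omega, by omega, by omega, ?_,
      by omega, by omega, by omega, hsd⟩
    · rwa [show L + 1 - (j + 2) = L - (j + 1) by omega]
    · rw [pow_succ']
      omega
  · rw [canon_hubRaw hh, valid_hubRaw_iff hh]
    exact mem_hubIdx_of_gluing hj hi hτ he

theorem reachableIn_spine (hh : 1 ≤ h) (hd : 1 ≤ d) :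
    ReachableIn (G h d (L + 1)) (pieceVertsWith h d L (j + 1, i)
        (insert (e, (i * NN h + τ) * NN h ^ (j - e)) (ends (j + 1, i))))
      (vert h d (L + 1) (.tree (j + 2) (i + 1) (leafPos h (κ + 1))))
      (hubVert h d (L + 1) (e, (i * NN h + τ) * NN h ^ (j - e))) := by
  have hvalid := valid_canon_spineRaw (d := d) hj hi hκ hκτ hτ he hh
  have hchain := ReachableIn.of_chain (n := d + 1) (U := pieceVertsWith h d L (j + 1, i)
      (insert (e, (i * NN h + τ) * NN h ^ (j - e)) (ends (j + 1, i))))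
    (c := fun s => vert h d (L + 1) (spineRaw h d j i κ τ e s))
    (fun s hs => adj_vert (rawAdj_spineRaw hd (Nat.le_of_lt_succ hs))
      (canon_spineRaw_ne hh hd (Nat.le_of_lt_succ hs)) (hvalid s) (hvalid (s + 1)))
    (fun s _ => ?_)
  · simpa [spineRaw, hubVert] using hchain
  have hextreme : ∀ p, extremeLeaf (j + 2) (i + 1) p ∈ ends (j + 1, i) := fun p => by
    unfold extremeLeaf
    split_ifs <;> simp [ends]
  have hmem := vert_mem_pieceVertsWith (p := (j + 1, i)) (T := insert
    (e, (i * NN h + τ) * NN h ^ (j - e)) (ends (j + 1, i))) hh (hvalid s)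
  unfold spineRaw at hmem ⊢
  split_ifs at hmem ⊢ with hs hsd
  · exact hmem (length_leafPos _ _) (.inl rfl) (.inr (hextreme _))
  · refine hmem rfl (.inl rfl) ?_
    rw [nearestHub]
    split_ifs
    · exact .inr (hextreme _)
    · exact .inl (by simp)
  · exact hmem (height_hubRaw _) (.inr ⟨_, rfl⟩) (.inl (nearestHub_hubRaw hh _))

end Spine

/-- The pieces, hubs and leaves of `G_{h,d,m}` for `m = L + 1`. -/
noncomputable def fatLadder (hh : 2 * K < h) (hd : 2 * K < d / 2) :
    FatLadder (G h d (L + 1)) K (2 ^ h) (NN h) L where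
  hub := hubVert h d (L + 1)
  nearest u := nearestHub h d u
  piece := pieceVerts h d (L + 1)
  leaf p κ := vert h d (L + 1) (.tree (p.1 + 1) (p.2 + 1) (leafPos h (κ + 1)))
  N_add_one := NN_add_one h
  nearest_eq := nearestHub_eq_of_edist_le hh hd
  piece_unique hu hu' hfar huu' :=
    hu.2.symm.trans ((label_eq_of_edist_le (by omega) hu.1 hfar huu').trans hu'.2)
  rail := reachableIn_rail (by omega)
  leaf_zero {j i} _ _ := vert_congr <| by
    rw [leafPos_one, canon_tree_replicate_false (by omega), canon_hubRaw (by omega)]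
  leaf_last _ _ := by
    rw [Nat.sub_add_cancel Nat.one_le_two_pow, leafPos_two_pow]
    rfl
  spine hj hi hκ hκτ hτ he := reachableIn_spine hj hi hκ hκτ hτ he (by omega) (by omega)

end Ghdm

theorem statement7_general (M A n : ℕ) :
    ∃ h d m : ℕ, 2 ≤ m ∧
      ∀ (V' : Type*) (H : SimpleGraph V') (f : Ghdm.Verts h d m → V'),
        (∀ u v, H.edist (f u) (f v) ≤ M * (Ghdm.G h d m).edist u v + A) →
        (∀ u v, (Ghdm.G h d m).edist u v ≤ M * H.edist (f u) (f v) + M * A) →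
          CGT.HasMinor H (⊤ : SimpleGraph (Fin n)) := by
  let K := M * (2 * (M + A)) + M * A
  have hN : 2 * (n + 2) ≤ Ghdm.NN (2 * K + n + 2) := by
    have hpow : 2 * K + n + 2 < 2 ^ (2 * K + n + 2) := Nat.lt_two_pow_self
    have := Ghdm.NN_add_one (2 * K + n + 2)
    omega
  refine ⟨2 * K + n + 2, 4 * K + 2, n + 4, by omega, fun V' H f upper lower => ?_⟩
  have hminor := (Ghdm.fatLadder (K := K) (L := n + 3) (by omega) (by omega)).hasMinor_top
    (CGT.IsCoarseEmbedding.of_edist_le upper lower) (by omega) hN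
  exact hminor.comap ⟨Fin.castAdd 2, fun hne => (Fin.castAdd_injective n 2).ne hne⟩
    (Fin.castAdd_injective n 2)

/-- for every `M, A, n` with `M ≥ 1` there are `h, d, m` with `m ≥ 2` such
that `G_{h,d,m}` is not `(M,A)`-quasi-isometric to any graph with no `K_n` minor. -/
theorem statement7 (M A n : ℕ) (hM : 1 ≤ M) :
    ∃ h d m : ℕ, 2 ≤ m ∧
      ∀ (V' : Type) (H : SimpleGraph V'),
        ¬ CGT.HasMinor H (⊤ : SimpleGraph (Fin n)) →
          ¬ CGT.QIsometric M A (Ghdm.G h d m) H := by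
  obtain ⟨h, d, m, hm, hminor⟩ := statement7_general M A n
  exact ⟨h, d, m, hm, fun V' H hH ⟨f, hf⟩ => hH (hminor V' H f hf.upper hf.lower)⟩
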